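/- arXiv:1211.2224 — 2 statements merged into one kernel-verified Lean document; each statement's English description precedes it below -/
import Mathlib

section
/- Let Ω = (−h₁/2, h₁/2)×(−h₂/2, h₂/2) with h₁,h₂ > 0 and Γ = ∂Ω. For α > 0 let z₀(α) denote the unique root of the equation tanh(z/α)·tan(zα) = 1 with 0 < z₀(α)·α < π/2, and set α₀ = √(max{h₁,h₂}/min{h₁,h₂}). Then the sharp constant C₂(Ω,Γ) in the inequality ‖w‖_{L²(Γ)} ≤ C₂‖∇w‖_{L²(Ω)} for all w ∈ H̃¹(Ω,Γ) is equal to ( (2 z₀(α₀)/√(h₁h₂)) · tanh(z₀(α₀)/α₀) )^{-1/2}. -/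
open MeasureTheory Real

theorem picone_aux (p q : ℝ) (hpq : p ≤ q) (f f' F F' : ℝ → ℝ)
    (hf : ∀ t, HasDerivAt f (f' t) t) (hf' : Continuous f')
    (hF : ∀ t ∈ Set.Icc p q, HasDerivAt F (F' t) t) (hF' : ContinuousOn F' (Set.Icc p q))
    (m : ℝ) (hm : ∀ t ∈ Set.Icc p q, F' t + F t ^ 2 = m) :
    F q * f q ^ 2 - F p * f p ^ 2 - m * (∫ t in p..q, f t ^ 2) ≤ ∫ t in p..q, f' t ^ 2 := by
  have hfc : Continuous f := continuous_iff_continuousAt.2 fun t => (hf t).continuousAt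
  have hFc : ContinuousOn F (Set.Icc p q) := fun t ht => (hF t ht).continuousAt.continuousWithinAt
  have hu : Set.uIcc p q = Set.Icc p q := Set.uIcc_of_le hpq
  have h1 : ∫ t in p..q, (F' t * f t ^ 2 + F t * (2 * f t * f' t)) = F q * f q ^ 2 - F p * f p ^ 2 := by
    apply intervalIntegral.integral_eq_sub_of_hasDerivAt (f := fun t => F t * f t ^ 2)
    · intro t ht
      rw [hu] at ht
      have := (hF t ht).mul ((hf t).pow 2)
      refine this.congr_deriv ?_
      simp
    · apply ContinuousOn.intervalIntegrable
      rw [hu]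
      fun_prop
  rw [← h1, ← intervalIntegral.integral_const_mul, ← intervalIntegral.integral_sub]
  · apply intervalIntegral.integral_mono_on hpq
    · apply ContinuousOn.intervalIntegrable
      rw [hu]
      fun_prop
    · apply ContinuousOn.intervalIntegrable
      fun_prop
    · intro t ht
      rw [← hm t ht]
      nlinarith [sq_nonneg (f' t - F t * f t)]
  · apply ContinuousOn.intervalIntegrable
    rw [hu]
    fun_prop
  · apply ContinuousOn.intervalIntegrable
    fun_prop

theorem lemA (a k : ℝ) (ha : 0 < a) (f f' : ℝ → ℝ)
    (hf : ∀ t, HasDerivAt f (f' t) t) (hf' : Continuous f') :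
    k * tanh (k * a) * (f (-a) ^ 2 + f a ^ 2) - k ^ 2 * (∫ t in (-a)..a, f t ^ 2)
      ≤ ∫ t in (-a)..a, f' t ^ 2 := by
  have hd : ∀ t : ℝ, HasDerivAt (fun t => k * (sinh (k * t) / cosh (k * t)))
      (k ^ 2 - (k * (sinh (k * t) / cosh (k * t))) ^ 2) t := by
    intro t
    have hc : cosh (k * t) ≠ 0 := (cosh_pos _).ne'
    have h0 : HasDerivAt (fun t : ℝ => k * t) k t := by simpa using (hasDerivAt_id t).const_mul k
    have := (h0.sinh.div h0.cosh hc).const_mul k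
    refine this.congr_deriv ?_
    field_simp
  have hcont : Continuous fun t : ℝ => k * (sinh (k * t) / cosh (k * t)) :=
    continuous_iff_continuousAt.2 fun t => (hd t).continuousAt
  have := picone_aux (-a) a (by linarith) f f' _ _ hf hf' (fun t _ => hd t)
    (continuous_const.sub (hcont.pow 2)).continuousOn (k ^ 2) (by intro t _; ring)
  rw [tanh_eq_sinh_div_cosh]
  simp only [mul_neg, sinh_neg, cosh_neg, neg_div] at this
  linarith

theorem lemB0 (c r k : ℝ) (hr : 0 < r) (hk : 0 < k) (hkr : k * r < π) (f f' : ℝ → ℝ)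
    (hf : ∀ t, HasDerivAt f (f' t) t) (hf' : Continuous f') (h0 : f c = 0) :
    k * (cos (k * r) / sin (k * r)) * f (c + r) ^ 2 + k ^ 2 * (∫ t in c..(c + r), f t ^ 2)
      ≤ ∫ t in c..(c + r), f' t ^ 2 := by
  have key : ∀ δ : ℝ, 0 < δ → k * r + δ < π →
     k * (cos (k * r + δ) / sin (k * r + δ)) * f (c + r) ^ 2 + k ^ 2 * (∫ t in c..(c + r), f t ^ 2)
      ≤ ∫ t in c..(c + r), f' t ^ 2 := by
    intro δ hδ hδ2
    have hs : ∀ t ∈ Set.Icc c (c + r), sin (k * (t - c) + δ) ≠ 0 := by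
      intro t ht
      apply (sin_pos_of_pos_of_lt_pi _ _).ne'
      · have := mul_nonneg hk.le (sub_nonneg.2 ht.1)
        linarith
      · have : k * (t - c) ≤ k * r := mul_le_mul_of_nonneg_left (by linarith [ht.2]) hk.le
        linarith
    have hd : ∀ t ∈ Set.Icc c (c + r), HasDerivAt (fun t => k * (cos (k * (t - c) + δ) / sin (k * (t - c) + δ)))
      (- k ^ 2 - (k * (cos (k * (t - c) + δ) / sin (k * (t - c) + δ))) ^ 2) t := by
      intro t ht
      have h0 : HasDerivAt (fun t : ℝ => k * (t - c) + δ) k t := by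
        simpa using (((hasDerivAt_id t).sub_const c).const_mul k).add_const δ
      have := (h0.cos.div h0.sin (hs t ht)).const_mul k
      refine this.congr_deriv ?_
      have := hs t ht
      field_simp
    have hcont : ContinuousOn (fun t : ℝ => k * (cos (k * (t - c) + δ) / sin (k * (t - c) + δ)))
        (Set.Icc c (c + r)) := fun t ht => (hd t ht).continuousAt.continuousWithinAt
    have := picone_aux c (c + r) (by linarith) f f' _ _ hf hf' hd
      (by fun_prop) (- k ^ 2) (by intro t _; ring)
    simp only [h0, add_sub_cancel_left] at this
    linarith
  have hkr0 : 0 < k * r := mul_pos hk hr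
  have hs0 : sin (k * r + 0) ≠ 0 := by
    rw [add_zero]; exact (sin_pos_of_pos_of_lt_pi hkr0 hkr).ne'
  have hlim : Filter.Tendsto (fun δ : ℝ => k * (cos (k * r + δ) / sin (k * r + δ)) * f (c + r) ^ 2
      + k ^ 2 * (∫ t in c..(c + r), f t ^ 2)) (nhdsWithin 0 (Set.Ioi 0))
      (nhds (k * (cos (k * r + 0) / sin (k * r + 0)) * f (c + r) ^ 2
      + k ^ 2 * (∫ t in c..(c + r), f t ^ 2))) := by
    apply Filter.Tendsto.mono_left _ nhdsWithin_le_nhds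
    apply ContinuousAt.tendsto (f := fun δ : ℝ => k * (cos (k * r + δ) / sin (k * r + δ)) * f (c + r) ^ 2
      + k ^ 2 * (∫ t in c..(c + r), f t ^ 2))
    fun_prop (disch := assumption)
  rw [add_zero] at hlim
  apply le_of_tendsto hlim
  filter_upwards [Ioo_mem_nhdsGT (show (0:ℝ) < π - k * r by linarith)] with δ hδ
  exact key δ hδ.1 (by linarith [hδ.2])

theorem lemB (c r k : ℝ) (hr : 0 < r) (hk : 0 < k) (hkr : k * r < π) (f f' : ℝ → ℝ)
    (hf : ∀ t, HasDerivAt f (f' t) t) (hf' : Continuous f') (h0 : f c = 0) :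
    k * (cos (k * r) / sin (k * r)) * (f (c - r) ^ 2 + f (c + r) ^ 2)
      + k ^ 2 * (∫ t in (c - r)..(c + r), f t ^ 2)
      ≤ ∫ t in (c - r)..(c + r), f' t ^ 2 := by
  have hfc : Continuous f := continuous_iff_continuousAt.2 fun t => (hf t).continuousAt
  have h1 := lemB0 c r k hr hk hkr f f' hf hf' h0
  have h2 := lemB0 c r k hr hk hkr (fun t => f (2 * c - t)) (fun t => - f' (2 * c - t))
    (by
      intro t
      have h := (hf (2 * c - t)).comp t ((hasDerivAt_id t).const_sub (2 * c))
      exact h.congr_deriv (by simp)) (by fun_prop) (by simp [two_mul, h0])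
  have e1 : ∫ t in c..(c + r), f (2 * c - t) ^ 2 = ∫ t in (c - r)..c, f t ^ 2 := by
    rw [intervalIntegral.integral_comp_sub_left (fun t => f t ^ 2)]
    congr 1 <;> ring
  have e2 : ∫ t in c..(c + r), (- f' (2 * c - t)) ^ 2 = ∫ t in (c - r)..c, f' t ^ 2 := by
    simp only [neg_sq]
    rw [intervalIntegral.integral_comp_sub_left (fun t => f' t ^ 2)]
    congr 1 <;> ring
  rw [e1, e2, show 2 * c - (c + r) = c - r by ring] at h2
  rw [← intervalIntegral.integral_add_adjacent_intervals (a := c - r) (b := c) (c := c + r) (f := fun t => f t ^ 2)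
    (Continuous.intervalIntegrable (by fun_prop) _ _) (Continuous.intervalIntegrable (by fun_prop) _ _),
    ← intervalIntegral.integral_add_adjacent_intervals (a := c - r) (b := c) (c := c + r) (f := fun t => f' t ^ 2)
    (Continuous.intervalIntegrable (by fun_prop) _ _) (Continuous.intervalIntegrable (by fun_prop) _ _)]
  linarith

/-- Cauchy-Schwarz -/
theorem cs_aux (p q : ℝ) (hpq : p ≤ q) (f g : ℝ → ℝ) (hf : Continuous f) (hg : Continuous g) :
    (∫ t in p..q, f t * g t) ^ 2 ≤ (∫ t in p..q, f t ^ 2) * (∫ t in p..q, g t ^ 2) := by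
  have h : ∀ s : ℝ, 0 ≤ (∫ t in p..q, f t ^ 2) * (s * s) + (2 * ∫ t in p..q, f t * g t) * s
      + (∫ t in p..q, g t ^ 2) := by
    intro s
    have : (∫ t in p..q, f t ^ 2) * (s * s) + (2 * ∫ t in p..q, f t * g t) * s
      + (∫ t in p..q, g t ^ 2) = ∫ t in p..q, (s * f t + g t) ^ 2 := by
      rw [← intervalIntegral.integral_const_mul, ← intervalIntegral.integral_mul_const,
        ← intervalIntegral.integral_mul_const, ← intervalIntegral.integral_add,
        ← intervalIntegral.integral_add]
      · congr 1; ext t; ring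
      all_goals apply Continuous.intervalIntegrable; fun_prop
    rw [this]
    exact intervalIntegral.integral_nonneg hpq fun t _ => sq_nonneg _
  have := discrim_le_zero h
  unfold discrim at this
  nlinarith

theorem lemC (b : ℝ) (hb : 0 < b) (f f' : ℝ → ℝ)
    (hf : ∀ t, HasDerivAt f (f' t) t) (hf' : Continuous f') (he : ∀ t, f (-t) = f t) :
    (f b - (1 / (2 * b)) * ∫ t in (-b)..b, f t) ^ 2 ≤ b / 6 * ∫ t in (-b)..b, f' t ^ 2 := by
  have hfc : Continuous f := continuous_iff_continuousAt.2 fun t => (hf t).continuousAt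
  have h1 := intervalIntegral.integral_mul_deriv_eq_deriv_mul (a := -b) (b := b) (u := fun t => t)
    (u' := fun _ => 1) (v := f) (v' := f') (fun t _ => hasDerivAt_id t) (fun t _ => hf t)
    (Continuous.intervalIntegrable (by fun_prop) _ _) (Continuous.intervalIntegrable (by fun_prop) _ _)
  have h2 := cs_aux (-b) b (by linarith) (fun t => t) f' continuous_id hf'
  rw [h1, he] at h2
  simp only [one_mul, integral_pow] at h2
  have : (f b - (1 / (2 * b)) * ∫ t in (-b)..b, f t) ^ 2 = 
    (1 / (4 * b ^ 2)) * (b * f b - -b * f b - ∫ t in (-b)..b, f t) ^ 2 := by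
    field_simp; ring
  rw [this]
  calc _ ≤ (1 / (4 * b ^ 2)) * _ := mul_le_mul_of_nonneg_left h2 (by positivity)
    _ = _ := by field_simp; norm_num; ring

theorem lemD (b : ℝ) (hb : 0 < b) (f f' : ℝ → ℝ)
    (hf : ∀ t, HasDerivAt f (f' t) t) (hf' : Continuous f') (he : ∀ t, f (-t) = f t) :
    (∫ t in (-b)..b, (f t - (1 / (2 * b)) * ∫ t in (-b)..b, f t) ^ 2)
      ≤ b ^ 2 / 6 * ∫ t in (-b)..b, f' t ^ 2 := by
  have hfc : Continuous f := continuous_iff_continuousAt.2 fun t => (hf t).continuousAt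
  have hsin : 0 < sin (3 / 2) := sin_pos_of_pos_of_lt_pi (by norm_num) (by linarith [pi_gt_three])
  have hcos : 0 < cos (3 / 2) := cos_pos_of_mem_Ioo ⟨by linarith [pi_gt_three], by linarith [pi_gt_three]⟩
  have hk : (3 / b) * (b / 2) = 3 / 2 := by field_simp
  have key : ∀ c, f c = f (b / 2) → 
     (∫ t in (c - b/2)..(c + b/2), (f t - f (b/2)) ^ 2) ≤ b ^ 2 / 6 * ∫ t in (c - b/2)..(c + b/2), f' t ^ 2 := by
    intro c hc
    have := lemB c (b / 2) (3 / b) (by positivity) (by positivity) (by rw [hk]; linarith [pi_gt_three])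
      (fun t => f t - f (b / 2)) f' (fun t => (hf t).sub_const _) hf' (by simp [hc])
    rw [hk] at this
    have h3 : 0 ≤ 3 / b * (cos (3 / 2) / sin (3 / 2)) *
      ((f (c - b / 2) - f (b / 2)) ^ 2 + (f (c + b / 2) - f (b / 2)) ^ 2) := by positivity
    have h4 : (3 / b) ^ 2 * ∫ t in (c - b/2)..(c + b/2), (f t - f (b/2)) ^ 2 ≤ ∫ t in (c - b/2)..(c + b/2), f' t ^ 2 := by linarith
    have h5 : 0 ≤ ∫ t in (c - b/2)..(c + b/2), f' t ^ 2 :=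
      intervalIntegral.integral_nonneg (by linarith) fun t _ => sq_nonneg _
    calc _ = b ^ 2 / 9 * ((3 / b) ^ 2 * ∫ t in (c - b/2)..(c + b/2), (f t - f (b/2)) ^ 2) := by
          field_simp; norm_num
      _ ≤ b ^ 2 / 9 * ∫ t in (c - b/2)..(c + b/2), f' t ^ 2 := by gcongr
      _ ≤ _ := by gcongr; norm_num
  have k1 := key (b / 2) rfl
  have k2 := key (- (b / 2)) (he _)
  rw [sub_self, add_halves] at k1
  rw [show -(b/2) - b/2 = -b by ring, neg_add_cancel] at k2
  have hd : (∫ t in (-b)..b, (f t - f (b / 2)) ^ 2) ≤ b ^ 2 / 6 * ∫ t in (-b)..b, f' t ^ 2 := by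
    rw [← intervalIntegral.integral_add_adjacent_intervals (a := -b) (b := 0) (c := b) (f := fun t => f' t ^ 2)
      (Continuous.intervalIntegrable (by fun_prop) _ _) (Continuous.intervalIntegrable (by fun_prop) _ _),
      ← intervalIntegral.integral_add_adjacent_intervals (a := -b) (b := 0) (c := b) 
      (Continuous.intervalIntegrable (by fun_prop) _ _) (Continuous.intervalIntegrable (by fun_prop) _ _)]
    linarith
  refine le_trans ?_ hd
  have ex : ∀ d : ℝ, (∫ t in (-b)..b, (f t - d) ^ 2) = (∫ t in (-b)..b, f t ^ 2) - 2 * d * (∫ t in (-b)..b, f t) + 2 * b * d ^ 2 := by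
    intro d
    have : ∀ t, (f t - d) ^ 2 = f t ^ 2 - 2 * d * f t + d ^ 2 := fun t => by ring
    simp only [this]
    rw [intervalIntegral.integral_add, intervalIntegral.integral_sub, intervalIntegral.integral_const_mul,
      intervalIntegral.integral_const]
    · simp only [smul_eq_mul]; ring
    all_goals apply Continuous.intervalIntegrable; fun_prop
  rw [ex, ex]
  set I := ∫ t in (-b)..b, f t
  have : 0 ≤ 2 * b * (f (b/2) - 1 / (2 * b) * I) ^ 2 := by positivity
  have e : 2 * b * (f (b/2) - 1 / (2 * b) * I) ^ 2 = 2 * b * f (b/2)^2 - 2 * f (b/2) * I + 1 / (2 * b) * I ^ 2 := by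
    field_simp; ring
  have e2 : - 2 * (1 / (2 * b) * I) * I + 2 * b * (1 / (2 * b) * I) ^ 2 = - (1 / (2 * b) * I ^ 2) := by
    field_simp; ring
  linarith

noncomputable def I2 (a b : ℝ) (G : ℝ → ℝ → ℝ) : ℝ := ∫ x in (-a)..a, ∫ y in (-b)..b, G x y

theorem I2_swap (a b : ℝ) (G : ℝ → ℝ → ℝ) (hG : Continuous (Function.uncurry G)) :
    I2 a b G = I2 b a (fun y x => G x y) := by
  unfold I2
  apply intervalIntegral_intervalIntegral_swap
  have hc : IsCompact (Set.uIcc (-a) a ×ˢ Set.uIcc (-b) b) := isCompact_uIcc.prod isCompact_uIcc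
  exact (hG.continuousOn.integrableOn_compact hc).mono_set
    (Set.prod_mono Set.uIoc_subset_uIcc Set.uIoc_subset_uIcc)

structure Good (W Wx Wy : ℝ → ℝ → ℝ) : Prop where
  cW : Continuous (Function.uncurry W)
  cx : Continuous (Function.uncurry Wx)
  cy : Continuous (Function.uncurry Wy)
  dx : ∀ x y, HasDerivAt (fun s => W s y) (Wx x y) x
  dy : ∀ x y, HasDerivAt (fun t => W x t) (Wy x y) y

theorem cswap {G : ℝ → ℝ → ℝ} (hG : Continuous (Function.uncurry G)) :
    Continuous (Function.uncurry fun y x => G x y) := hG.comp continuous_swap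

theorem Good.swap {W Wx Wy : ℝ → ℝ → ℝ} (h : Good W Wx Wy) :
    Good (fun y x => W x y) (fun y x => Wy x y) (fun y x => Wx x y) :=
  ⟨cswap h.cW, cswap h.cy, cswap h.cx, fun y x => h.dy x y, fun y x => h.dx x y⟩

noncomputable def Bd (a b : ℝ) (W : ℝ → ℝ → ℝ) : ℝ :=
  (∫ t in (-b)..b, (W (-a) t ^ 2 + W a t ^ 2)) + ∫ s in (-a)..a, (W s (-b) ^ 2 + W s b ^ 2)

noncomputable def En (a b : ℝ) (Wx Wy : ℝ → ℝ → ℝ) : ℝ :=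
  I2 a b (fun x y => Wx x y ^ 2) + I2 a b (fun x y => Wy x y ^ 2)

theorem csq {G : ℝ → ℝ → ℝ} (hG : Continuous (Function.uncurry G)) :
    Continuous (Function.uncurry fun x y => G x y ^ 2) := hG.pow 2

theorem Bd_swap (a b : ℝ) (W : ℝ → ℝ → ℝ) : Bd a b W = Bd b a (fun y x => W x y) := by
  unfold Bd; rw [add_comm]

theorem En_swap (a b : ℝ) (Wx Wy : ℝ → ℝ → ℝ) (hx : Continuous (Function.uncurry Wx))
    (hy : Continuous (Function.uncurry Wy)) :
    En a b Wx Wy = En b a (fun y x => Wy x y) (fun y x => Wx x y) := by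
  unfold En
  rw [add_comm, I2_swap a b _ (csq hx), I2_swap a b _ (csq hy)]

theorem c1 {G : ℝ → ℝ → ℝ} (hG : Continuous (Function.uncurry G)) (y : ℝ) :
    Continuous fun x => G x y := hG.comp (continuous_id.prodMk continuous_const)

theorem c2 {G : ℝ → ℝ → ℝ} (hG : Continuous (Function.uncurry G)) (x : ℝ) :
    Continuous fun y => G x y := hG.comp (continuous_const.prodMk continuous_id)

theorem cInt {G : ℝ → ℝ → ℝ} (hG : Continuous (Function.uncurry G)) (b : ℝ) :
    Continuous fun x => ∫ y in (-b)..b, G x y :=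
  intervalIntegral.continuous_parametric_intervalIntegral_of_continuous' hG _ _

theorem odd_lem (a b k lam : ℝ) (ha : 0 < a) (hb : 0 < b) (hk : 0 < k) (hkb : k * b < π)
    (h1 : lam ≤ k * tanh (k * a)) (h2 : lam ≤ k * (cos (k * b) / sin (k * b)))
    {W Wx Wy : ℝ → ℝ → ℝ} (h : Good W Wx Wy) (h0 : ∀ x, W x 0 = 0) :
    lam * Bd a b W ≤ En a b Wx Wy := by
  have e1 : ∀ y, lam * (W (-a) y ^ 2 + W a y ^ 2) - k ^ 2 * (∫ x in (-a)..a, W x y ^ 2)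
      ≤ ∫ x in (-a)..a, Wx x y ^ 2 := by
    intro y
    have := lemA a k ha (fun x => W x y) (fun x => Wx x y) (fun x => h.dx x y) (c1 h.cx y)
    have h3 : lam * (W (-a) y ^ 2 + W a y ^ 2) ≤ k * tanh (k * a) * (W (-a) y ^ 2 + W a y ^ 2) := by
      gcongr
    linarith
  have e2 : ∀ x, lam * (W x (-b) ^ 2 + W x b ^ 2) + k ^ 2 * (∫ y in (-b)..b, W x y ^ 2)
      ≤ ∫ y in (-b)..b, Wy x y ^ 2 := by
    intro x
    have := lemB 0 b k hb hk hkb (fun y => W x y) (fun y => Wy x y) (fun y => h.dy x y) (c2 h.cy x) (h0 x)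
    rw [zero_sub, zero_add] at this
    have h3 : lam * (W x (-b) ^ 2 + W x b ^ 2) ≤
      k * (cos (k * b) / sin (k * b)) * (W x (-b) ^ 2 + W x b ^ 2) := by
      gcongr
    linarith
  have cW2 := csq h.cW
  have ca := c2 h.cW a
  have ca' := c2 h.cW (-a)
  have cb := c1 h.cW b
  have cb' := c1 h.cW (-b)
  have ci1 := cInt (cswap cW2) a
  have ci2 := cInt cW2 b
  have ci3 := cInt (cswap (csq h.cx)) a
  have ci4 := cInt (csq h.cy) b
  have i1 := intervalIntegral.integral_mono_on (μ := volume) (a := -b) (b := b) (by linarith)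
    (Continuous.intervalIntegrable (by fun_prop) _ _) (Continuous.intervalIntegrable ci3 _ _)
    (fun y _ => e1 y)
  have i2 := intervalIntegral.integral_mono_on (μ := volume) (a := -a) (b := a) (by linarith)
    (Continuous.intervalIntegrable (by fun_prop) _ _) (Continuous.intervalIntegrable ci4 _ _)
    (fun x _ => e2 x)
  rw [intervalIntegral.integral_sub (Continuous.intervalIntegrable (by fun_prop) _ _)
    (Continuous.intervalIntegrable (by fun_prop) _ _), intervalIntegral.integral_const_mul,
    intervalIntegral.integral_const_mul] at i1
  rw [intervalIntegral.integral_add (Continuous.intervalIntegrable (by fun_prop) _ _)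
    (Continuous.intervalIntegrable (by fun_prop) _ _), intervalIntegral.integral_const_mul,
    intervalIntegral.integral_const_mul] at i2
  have s1 := I2_swap a b _ cW2
  have s2 := I2_swap a b _ (csq h.cx)
  unfold En
  rw [s2]
  unfold I2 at *
  unfold Bd
  rw [← s1] at i1
  linarith

theorem ee_side (a b : ℝ) (ha : 0 < a) (hb : 0 < b)
    {W Wx Wy : ℝ → ℝ → ℝ} (h : Good W Wx Wy) (hx : ∀ x y, W (-x) y = W x y)
    (hy : ∀ x y, W x (-y) = W x y) (h0 : I2 a b W = 0) :
    ∫ y in (-b)..b, W a y ^ 2 ≤ a / 3 * I2 a b (fun x y => Wx x y ^ 2)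
      + b ^ 2 / (6 * a) * I2 a b (fun x y => Wy x y ^ 2) := by
  set m : ℝ → ℝ := fun x => (1 / (2 * b)) * ∫ y in (-b)..b, W x y with hm
  have cm : Continuous m := continuous_const.mul (cInt h.cW b)
  have cd : Continuous (Function.uncurry fun x y => W x y - m x) :=
    h.cW.sub (cm.comp continuous_fst)
  have hm0 : ∫ x in (-a)..a, m x = 0 := by
    rw [hm, intervalIntegral.integral_const_mul]
    unfold I2 at h0
    rw [h0, mul_zero]
  have e1 : ∀ y, W a y ^ 2 ≤ a / 3 * (∫ x in (-a)..a, Wx x y ^ 2)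
      + 1 / a * (∫ x in (-a)..a, (W x y - m x) ^ 2) := by
    intro y
    have hC := lemC a ha (fun x => W x y) (fun x => Wx x y) (fun x => h.dx x y) (c1 h.cx y) (fun x => hx x y)
    have hcs := cs_aux (-a) a (by linarith) (fun _ => 1) (fun x => W x y - m x) continuous_const (c1 cd y)
    simp only [one_mul, one_pow, intervalIntegral.integral_const, smul_eq_mul, mul_one] at hcs
    rw [intervalIntegral.integral_sub ((c1 h.cW y).intervalIntegrable _ _) (cm.intervalIntegrable _ _),
      hm0, sub_zero] at hcs
    set J := ∫ x in (-a)..a, W x y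
    set P := ∫ x in (-a)..a, (W x y - m x) ^ 2
    have h4 : (1 / (2 * a) * J) ^ 2 ≤ 1 / (2 * a) * P := by
      calc (1 / (2 * a) * J) ^ 2 = 1 / (4 * a ^ 2) * J ^ 2 := by field_simp; ring
        _ ≤ 1 / (4 * a ^ 2) * ((a - -a) * P) := by gcongr
        _ = _ := by field_simp; ring
    have h5 : 1 / a * P = 2 * (1 / (2 * a) * P) := by field_simp
    nlinarith [sq_nonneg (W a y - 2 * (1 / (2 * a) * J))]
  have e2 : ∀ x, (∫ y in (-b)..b, (W x y - m x) ^ 2) ≤ b ^ 2 / 6 * ∫ y in (-b)..b, Wy x y ^ 2 := 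
    fun x => lemD b hb (fun y => W x y) (fun y => Wy x y) (fun y => h.dy x y) (c2 h.cy x) (fun y => hy x y)
  have ca := c2 h.cW a
  have ci1 := cInt (cswap (csq cd)) a
  have ci2 := cInt (csq cd) b
  have ci3 := cInt (cswap (csq h.cx)) a
  have ci4 := cInt (csq h.cy) b
  have i1 := intervalIntegral.integral_mono_on (μ := volume) (a := -b) (b := b) (by linarith)
    (Continuous.intervalIntegrable (by fun_prop) _ _) (Continuous.intervalIntegrable (by fun_prop) _ _)
    (fun y _ => e1 y)
  have i2 := intervalIntegral.integral_mono_on (μ := volume) (a := -a) (b := a) (by linarith)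
    (Continuous.intervalIntegrable ci2 _ _) (Continuous.intervalIntegrable (by fun_prop) _ _)
    (fun x _ => e2 x)
  rw [intervalIntegral.integral_add (Continuous.intervalIntegrable (by fun_prop) _ _)
    (Continuous.intervalIntegrable (by fun_prop) _ _), intervalIntegral.integral_const_mul,
    intervalIntegral.integral_const_mul] at i1
  rw [intervalIntegral.integral_const_mul] at i2
  have s1 := I2_swap a b _ (csq cd)
  have s2 := I2_swap a b _ (csq h.cx)
  rw [s2]
  unfold I2 at *
  rw [← s1] at i1
  refine i1.trans ?_
  have i3 := mul_le_mul_of_nonneg_left i2 (show 0 ≤ 1 / a by positivity)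
  have r1 : b ^ 2 / (6 * a) = 1 / a * (b ^ 2 / 6) := by field_simp
  rw [r1]
  linarith

theorem I2_nonneg (a b : ℝ) (ha : 0 < a) (hb : 0 < b) (G : ℝ → ℝ → ℝ) : 0 ≤ I2 a b (fun x y => G x y ^ 2) :=
  intervalIntegral.integral_nonneg (by linarith) fun x _ =>
    intervalIntegral.integral_nonneg (by linarith) fun y _ => sq_nonneg _

theorem ee_lem (a b lam : ℝ) (ha : 0 < a) (hab : a ≤ b) (hl0 : 0 < lam)
    (hl : lam * (b + b ^ 2 / (3 * a)) ≤ 1)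
    {W Wx Wy : ℝ → ℝ → ℝ} (h : Good W Wx Wy) (hx : ∀ x y, W (-x) y = W x y)
    (hy : ∀ x y, W x (-y) = W x y) (h0 : I2 a b W = 0) :
    lam * Bd a b W ≤ En a b Wx Wy := by
  have hb : 0 < b := ha.trans_le hab
  have s1 := ee_side a b ha hb h hx hy h0
  have s2 := ee_side b a hb ha h.swap (fun y x => hy x y) (fun y x => hx x y) (by rw [← I2_swap _ _ _ h.cW]; exact h0)
  rw [← I2_swap a b _ (csq h.cx), ← I2_swap a b _ (csq h.cy)] at s2
  have hB : Bd a b W = 2 * (∫ y in (-b)..b, W a y ^ 2) + 2 * (∫ x in (-a)..a, W x b ^ 2) := by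
    unfold Bd
    simp only [hx, hy, ← two_mul, intervalIntegral.integral_const_mul]
  have hX := I2_nonneg a b ha hb Wx
  have hY := I2_nonneg a b ha hb Wy
  unfold En
  set X := I2 a b (fun x y => Wx x y ^ 2)
  set Y := I2 a b (fun x y => Wy x y ^ 2)
  have hK : Bd a b W ≤ (b + b ^ 2 / (3 * a)) * (X + Y) := by
    have k1 : 2 * a / 3 + a ^ 2 / (3 * b) ≤ b + b ^ 2 / (3 * a) := by
      have : a ^ 2 / (3 * b) ≤ a / 3 := by
        rw [div_le_div_iff₀ (by positivity) (by positivity)]; nlinarith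
      have : 0 ≤ b ^ 2 / (3 * a) := by positivity
      linarith
    have k2 : b ^ 2 / (3 * a) + 2 * b / 3 ≤ b + b ^ 2 / (3 * a) := by linarith
    have k3 := mul_le_mul_of_nonneg_right k1 hX
    have k4 := mul_le_mul_of_nonneg_right k2 hY
    have r1 : b ^ 2 / (6 * a) = b ^ 2 / (3 * a) / 2 := by field_simp; norm_num
    have r2 : a ^ 2 / (6 * b) = a ^ 2 / (3 * b) / 2 := by field_simp; norm_num
    rw [r1] at s1
    rw [r2] at s2
    rw [hB]
    linarith
  calc lam * Bd a b W ≤ lam * ((b + b ^ 2 / (3 * a)) * (X + Y)) := by gcongr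
    _ = lam * (b + b ^ 2 / (3 * a)) * (X + Y) := by ring
    _ ≤ 1 * (X + Y) := by gcongr
    _ = _ := one_mul _

theorem split1 (b : ℝ) (g : ℝ → ℝ) (hg : Continuous g) :
    (∫ y in (-b)..b, ((g y + g (-y)) / 2) ^ 2) + (∫ y in (-b)..b, ((g y - g (-y)) / 2) ^ 2)
      = ∫ y in (-b)..b, g y ^ 2 := by
  have h1 : ∫ y in (-b)..b, g (-y) ^ 2 = ∫ y in (-b)..b, g y ^ 2 := by
    rw [intervalIntegral.integral_comp_neg (fun y => g y ^ 2), neg_neg]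
  have h2 : (∫ y in (-b)..b, ((g y + g (-y)) / 2) ^ 2) + (∫ y in (-b)..b, ((g y - g (-y)) / 2) ^ 2)
      = 1 / 2 * (∫ y in (-b)..b, g y ^ 2) + 1 / 2 * (∫ y in (-b)..b, g (-y) ^ 2) := by
    rw [← intervalIntegral.integral_const_mul, ← intervalIntegral.integral_const_mul,
      ← intervalIntegral.integral_add, ← intervalIntegral.integral_add]
    · congr 1; ext t; ring
    all_goals apply Continuous.intervalIntegrable; fun_prop
  rw [h2, h1]; ring

noncomputable def ev (G : ℝ → ℝ → ℝ) : ℝ → ℝ → ℝ := fun x y => (G x y + G x (-y)) / 2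
noncomputable def od (G : ℝ → ℝ → ℝ) : ℝ → ℝ → ℝ := fun x y => (G x y - G x (-y)) / 2

theorem cneg {G : ℝ → ℝ → ℝ} (hG : Continuous (Function.uncurry G)) :
    Continuous (Function.uncurry fun x y => G x (-y)) :=
  hG.comp (continuous_fst.prodMk continuous_snd.neg)

theorem cev {G : ℝ → ℝ → ℝ} (hG : Continuous (Function.uncurry G)) :
    Continuous (Function.uncurry (ev G)) := (hG.add (cneg hG)).div_const 2

theorem cod {G : ℝ → ℝ → ℝ} (hG : Continuous (Function.uncurry G)) :
    Continuous (Function.uncurry (od G)) := (hG.sub (cneg hG)).div_const 2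

theorem dneg {f : ℝ → ℝ} {f' y : ℝ} (h : HasDerivAt f f' (-y)) :
    HasDerivAt (fun t => f (-t)) (-f') y := by
  have := h.comp y (hasDerivAt_neg y)
  exact this.congr_deriv (by ring)

theorem Good.gev {W Wx Wy : ℝ → ℝ → ℝ} (h : Good W Wx Wy) : Good (ev W) (ev Wx) (od Wy) :=
  ⟨cev h.cW, cev h.cx, cod h.cy, fun x y => ((h.dx x y).add (h.dx x (-y))).div_const 2,
    fun x y => (((h.dy x y).add (dneg (h.dy x (-y)))).div_const 2).congr_deriv (by unfold od; ring)⟩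

theorem Good.god {W Wx Wy : ℝ → ℝ → ℝ} (h : Good W Wx Wy) : Good (od W) (od Wx) (ev Wy) :=
  ⟨cod h.cW, cod h.cx, cev h.cy, fun x y => ((h.dx x y).sub (h.dx x (-y))).div_const 2,
    fun x y => (((h.dy x y).sub (dneg (h.dy x (-y)))).div_const 2).congr_deriv (by unfold ev; ring)⟩

theorem I2_split (a b : ℝ) (G : ℝ → ℝ → ℝ) (hG : Continuous (Function.uncurry G)) :
    I2 a b (fun x y => ev G x y ^ 2) + I2 a b (fun x y => od G x y ^ 2) = I2 a b (fun x y => G x y ^ 2) := by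
  unfold I2
  rw [← intervalIntegral.integral_add ((cInt (csq (cev hG)) b).intervalIntegrable _ _)
    ((cInt (csq (cod hG)) b).intervalIntegrable _ _)]
  congr 1; ext x
  exact split1 b (G x) (c2 hG x)

theorem Bd_split (a b : ℝ) (G : ℝ → ℝ → ℝ) (hG : Continuous (Function.uncurry G)) :
    Bd a b (ev G) + Bd a b (od G) = Bd a b G := by
  unfold Bd
  have ca := c2 hG a
  have ca' := c2 hG (-a)
  have cb := c1 hG b
  have cb' := c1 hG (-b)
  have h1 := split1 b (G a) (c2 hG a)
  have h2 := split1 b (G (-a)) (c2 hG (-a))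
  have h3 : (∫ s in (-a)..a, (ev G s (-b) ^ 2 + ev G s b ^ 2)) + ∫ s in (-a)..a, (od G s (-b) ^ 2 + od G s b ^ 2)
    = ∫ s in (-a)..a, (G s (-b) ^ 2 + G s b ^ 2) := by
    unfold ev od
    simp only [neg_neg]
    rw [← intervalIntegral.integral_add]
    · congr 1; ext t; ring
    all_goals apply Continuous.intervalIntegrable; fun_prop
  have h4 : (∫ t in (-b)..b, (ev G (-a) t ^ 2 + ev G a t ^ 2)) + (∫ t in (-b)..b, (od G (-a) t ^ 2 + od G a t ^ 2))
    = ∫ t in (-b)..b, (G (-a) t ^ 2 + G a t ^ 2) := by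
    rw [intervalIntegral.integral_add (f := fun t => G (-a) t ^ 2) (Continuous.intervalIntegrable (by fun_prop) _ _)
      (Continuous.intervalIntegrable (by fun_prop) _ _), ← h1, ← h2]
    unfold ev od
    rw [intervalIntegral.integral_add (Continuous.intervalIntegrable (by fun_prop) _ _)
      (Continuous.intervalIntegrable (by fun_prop) _ _), 
      intervalIntegral.integral_add (Continuous.intervalIntegrable (by fun_prop) _ _)
      (Continuous.intervalIntegrable (by fun_prop) _ _)]
    ring
  linarith

theorem I2_ev (a b : ℝ) (G : ℝ → ℝ → ℝ) (hG : Continuous (Function.uncurry G)) :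
    I2 a b (ev G) = I2 a b G := by
  unfold I2
  congr 1; ext x
  unfold ev
  have h1 : ∫ y in (-b)..b, G x (-y) = ∫ y in (-b)..b, G x y := by
    rw [intervalIntegral.integral_comp_neg (fun y => G x y), neg_neg]
  have c := c2 hG x
  rw [intervalIntegral.integral_div, intervalIntegral.integral_add (Continuous.intervalIntegrable (by fun_prop) _ _)
      (Continuous.intervalIntegrable (by fun_prop) _ _), h1]
  ring

theorem En_split (a b : ℝ) (Wx Wy : ℝ → ℝ → ℝ) (hx : Continuous (Function.uncurry Wx))
    (hy : Continuous (Function.uncurry Wy)) :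
    En a b (ev Wx) (od Wy) + En a b (od Wx) (ev Wy) = En a b Wx Wy := by
  unfold En
  rw [← I2_split a b Wx hx, ← I2_split a b Wy hy]
  ring

theorem main_ineq (a b k : ℝ) (ha : 0 < a) (hab : a ≤ b) (hk : 0 < k) (hkb : k * b < π / 2)
    (hroot : tanh (k * a) * tan (k * b) = 1)
    {W Wx Wy : ℝ → ℝ → ℝ} (h : Good W Wx Wy) (h0 : I2 a b W = 0) :
    k * tanh (k * a) * Bd a b W ≤ En a b Wx Wy := by
  have hb : 0 < b := ha.trans_le hab
  have hka : 0 < k * a := mul_pos hk ha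
  have hkb0 : 0 < k * b := mul_pos hk hb
  have hkab : k * a ≤ k * b := by gcongr
  have hs : 0 < sin (k * b) := sin_pos_of_pos_of_lt_pi hkb0 (by linarith [pi_pos])
  have hc : 0 < cos (k * b) := cos_pos_of_mem_Ioo ⟨by linarith [pi_pos], hkb⟩
  have hsa : 0 < sin (k * a) := sin_pos_of_pos_of_lt_pi hka (by linarith [pi_pos])
  have htan : tanh (k * a) = cos (k * b) / sin (k * b) := by
    rw [tan_eq_sin_div_cos] at hroot
    field_simp at hroot ⊢
    linarith
  have htp : 0 < tanh (k * a) := by rw [htan]; positivity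
  have hl0 : 0 < k * tanh (k * a) := mul_pos hk htp
  have hta : tanh (k * a) ≤ tanh (k * b) := by
    rw [tanh_eq_sinh_div_cosh, tanh_eq_sinh_div_cosh, div_le_div_iff₀ (cosh_pos _) (cosh_pos _)]
    have := sinh_nonneg_iff.2 (sub_nonneg.2 hkab)
    rw [sinh_sub] at this
    linarith
  have hcot : cos (k * b) / sin (k * b) ≤ cos (k * a) / sin (k * a) := by
    rw [div_le_div_iff₀ hs hsa]
    have := sin_nonneg_of_nonneg_of_le_pi (sub_nonneg.2 hkab) (by linarith [pi_pos])
    rw [sin_sub] at this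
    linarith
  have oddY : ∀ {W Wx Wy : ℝ → ℝ → ℝ}, Good W Wx Wy → (∀ x, W x 0 = 0) →
      k * tanh (k * a) * Bd a b W ≤ En a b Wx Wy := fun h h0 =>
    odd_lem a b k _ ha hb hk (by linarith [pi_pos]) le_rfl (by rw [htan]) h h0
  have oddX : ∀ {W Wx Wy : ℝ → ℝ → ℝ}, Good W Wx Wy → (∀ x, W x 0 = 0) →
      k * tanh (k * a) * Bd b a W ≤ En b a Wx Wy := fun h h0 =>
    odd_lem b a k _ hb ha hk (by linarith [pi_pos]) (by gcongr) (by rw [htan]; gcongr) h h0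
  have hl : k * tanh (k * a) * (b + b ^ 2 / (3 * a)) ≤ 1 := by
    have gy : Good (fun _ y => y) (fun _ _ => 0) (fun _ _ => 1) :=
      ⟨continuous_snd, continuous_const, continuous_const, fun x y => hasDerivAt_const _ _, fun x y => hasDerivAt_id y⟩
    have := oddY gy (fun _ => rfl)
    unfold Bd En I2 at this
    simp only [intervalIntegral.integral_const, smul_eq_mul, ← two_mul, intervalIntegral.integral_const_mul,
      integral_pow, neg_sq] at this
    norm_num at this
    have e : k * tanh (k * a) * (b + b ^ 2 / (3 * a)) * (4 * a * b)
      = k * tanh (k * a) * (2 * ((b ^ 3 - (-b) ^ 3) / 3) + (a + a) * (2 * b ^ 2)) := by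
      field_simp; ring
    have e2 : 0 < 4 * a * b := by positivity
    by_contra hcon
    push Not at hcon
    have := mul_lt_mul_of_pos_right hcon e2
    nlinarith
  -- split in y
  have b1 := Bd_split a b W h.cW
  have n1 := En_split a b Wx Wy h.cx h.cy
  have i1 := oddY h.god (fun x => by simp [od])
  -- split the even part in x
  have hU := h.gev.swap
  have b2 := Bd_split b a _ hU.cW
  have n2 := En_split b a _ _ hU.cx hU.cy
  have i2 := oddX hU.god (fun x => by simp [od])
  rw [← Bd_swap a b (ev W)] at b2
  rw [← En_swap a b _ _ h.gev.cx h.gev.cy] at n2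
  have i3 := ee_lem a b _ ha hab hl0 hl hU.gev.swap (by intro x y; simp [ev]; ring) (by intro x y; simp [ev]; ring)
    (by rw [← I2_swap b a _ hU.gev.cW, I2_ev _ _ _ hU.cW, ← I2_swap a b _ h.gev.cW, I2_ev _ _ _ h.cW, h0])
  rw [← Bd_swap b a, ← En_swap b a _ _ hU.gev.cx hU.gev.cy] at i3
  rw [← b1, ← n1, ← b2, ← n2]
  linarith

abbrev EE := EuclideanSpace ℝ (Fin 2)

theorem vec_decomp (x y : ℝ) : (!₂[x, y] : EE) = x • !₂[1, 0] + y • !₂[0, 1] := by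
  ext i; fin_cases i <;> simp

theorem cont_vec : Continuous (fun p : ℝ × ℝ => (!₂[p.1, p.2] : EE)) := by
  have : (fun p : ℝ × ℝ => (!₂[p.1, p.2] : EE)) = fun p => p.1 • (!₂[1, 0] : EE) + p.2 • (!₂[0, 1] : EE) :=
    funext fun p => vec_decomp p.1 p.2
  rw [this]
  fun_prop

theorem grad_sq (w : EE → ℝ) (x : EE) :
    ‖gradient w x‖ ^ 2 = fderiv ℝ w x !₂[1, 0] ^ 2 + fderiv ℝ w x !₂[0, 1] ^ 2 := by
  have h : ∀ v : EE, fderiv ℝ w x v = inner ℝ (gradient w x) v := by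
    intro v
    rw [gradient, InnerProductSpace.toDual_symm_apply]
  rw [h, h, EuclideanSpace.real_norm_sq_eq]
  generalize gradient w x = v
  simp [PiLp.inner_apply, Fin.sum_univ_two]

theorem setInt (a b : ℝ) (ha : 0 < a) (hb : 0 < b) (g : EE → ℝ) (hg : Continuous g) :
    ∫ x in {x : EE | x 0 ∈ Set.Ioo (-a) a ∧ x 1 ∈ Set.Ioo (-b) b}, g x
      = ∫ x in (-a)..a, ∫ y in (-b)..b, g !₂[x, y] := by
  have m1 := (volume_preserving_finTwoArrow ℝ).symm
  have m2 := (EuclideanSpace.volume_preserving_symm_measurableEquiv_toLp (Fin 2)).symm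
  have m3 := m2.comp m1
  have emb : MeasurableEmbedding ((MeasurableEquiv.toLp 2 (Fin 2 → ℝ)).symm.symm ∘ (MeasurableEquiv.finTwoArrow (α := ℝ)).symm) :=
    (MeasurableEquiv.measurableEmbedding _).comp (MeasurableEquiv.measurableEmbedding _)
  have e := m3.setIntegral_preimage_emb emb g {x : EE | x 0 ∈ Set.Ioo (-a) a ∧ x 1 ∈ Set.Ioo (-b) b}
  rw [← e]
  have hpre : ((MeasurableEquiv.toLp 2 (Fin 2 → ℝ)).symm.symm ∘ (MeasurableEquiv.finTwoArrow (α := ℝ)).symm) ⁻¹'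
      {x : EE | x 0 ∈ Set.Ioo (-a) a ∧ x 1 ∈ Set.Ioo (-b) b} = Set.Ioo (-a) a ×ˢ Set.Ioo (-b) b := by
    ext p
    rfl
  rw [hpre]
  have hfun : ∀ p : ℝ × ℝ, ((MeasurableEquiv.toLp 2 (Fin 2 → ℝ)).symm.symm ∘ (MeasurableEquiv.finTwoArrow (α := ℝ)).symm) p
     = !₂[p.1, p.2] := by
    intro p
    ext i; fin_cases i <;> rfl
  simp only [hfun]
  rw [Measure.volume_eq_prod, setIntegral_prod]
  · rw [intervalIntegral.integral_of_le (by linarith), integral_Ioc_eq_integral_Ioo]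
    congr 1; ext x
    rw [intervalIntegral.integral_of_le (by linarith), integral_Ioc_eq_integral_Ioo]
  · have hc : IsCompact (Set.Icc (-a) a ×ˢ Set.Icc (-b) b) := isCompact_Icc.prod isCompact_Icc
    exact ((hg.comp cont_vec).continuousOn.integrableOn_compact hc).mono_set
      (Set.prod_mono Set.Ioo_subset_Icc_self Set.Ioo_subset_Icc_self)

theorem good_of_contDiff (w : EE → ℝ) (hw : ContDiff ℝ 1 w) :
    Good (fun x y => w !₂[x, y]) (fun x y => fderiv ℝ w !₂[x, y] !₂[1, 0])
      (fun x y => fderiv ℝ w !₂[x, y] !₂[0, 1]) := by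
  have hd : ∀ x, HasFDerivAt w (fderiv ℝ w x) x := fun x => (hw.differentiable one_ne_zero x).hasFDerivAt
  have hc : Continuous (fderiv ℝ w) := hw.continuous_fderiv one_ne_zero
  refine ⟨hw.continuous.comp cont_vec, (hc.comp cont_vec).clm_apply continuous_const,
    (hc.comp cont_vec).clm_apply continuous_const, ?_, ?_⟩
  · intro x y
    have h1 : HasDerivAt (fun s : ℝ => (!₂[s, y] : EE)) !₂[1, 0] x := by
      have e : (fun s : ℝ => (!₂[s, y] : EE)) = fun s => s • (!₂[1, 0] : EE) + y • (!₂[0, 1] : EE) :=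
        funext fun s => vec_decomp s y
      rw [e]
      simpa using ((hasDerivAt_id x).smul_const (!₂[1, 0] : EE)).add_const (y • (!₂[0, 1] : EE))
    exact (hd _).comp_hasDerivAt x h1
  · intro x y
    have h1 : HasDerivAt (fun t : ℝ => (!₂[x, t] : EE)) !₂[0, 1] y := by
      have e : (fun t : ℝ => (!₂[x, t] : EE)) = fun t => x • (!₂[1, 0] : EE) + t • (!₂[0, 1] : EE) :=
        funext fun t => vec_decomp x t
      rw [e]
      simpa using ((hasDerivAt_id y).smul_const (!₂[0, 1] : EE)).const_add (x • (!₂[1, 0] : EE))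
    exact (hd _).comp_hasDerivAt y h1

theorem En_eq (a b : ℝ) (ha : 0 < a) (hb : 0 < b) (w : EE → ℝ) (hw : ContDiff ℝ 1 w) :
    ∫ x in {x : EE | x 0 ∈ Set.Ioo (-a) a ∧ x 1 ∈ Set.Ioo (-b) b}, ‖gradient w x‖ ^ 2
     = En a b (fun x y => fderiv ℝ w !₂[x, y] !₂[1, 0]) (fun x y => fderiv ℝ w !₂[x, y] !₂[0, 1]) := by
  have hc : Continuous (fderiv ℝ w) := hw.continuous_fderiv one_ne_zero
  have h := good_of_contDiff w hw
  simp only [grad_sq]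
  rw [setInt a b ha hb _ (by fun_prop)]
  unfold En I2
  rw [← intervalIntegral.integral_add ((cInt (csq h.cx) b).intervalIntegrable _ _)
    ((cInt (csq h.cy) b).intervalIntegrable _ _)]
  congr 1; ext x
  rw [← intervalIntegral.integral_add ((c2 (csq h.cx) x).intervalIntegrable _ _)
    ((c2 (csq h.cy) x).intervalIntegrable _ _)]

noncomputable def Mn (a b : ℝ) (W : ℝ → ℝ → ℝ) : ℝ :=
  (∫ t in (-b)..b, (W (-a) t + W a t)) + ∫ s in (-a)..a, (W s (-b) + W s b)

theorem Mn_swap (a b : ℝ) (W : ℝ → ℝ → ℝ) : Mn a b W = Mn b a (fun y x => W x y) := by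
  unfold Mn; rw [add_comm]

theorem shift1 (b c : ℝ) (f g : ℝ → ℝ) (hf : Continuous f) (hg : Continuous g) :
    (∫ t in (-b)..b, ((f t - c) ^ 2 + (g t - c) ^ 2)) = (∫ t in (-b)..b, (f t ^ 2 + g t ^ 2))
      - 2 * c * (∫ t in (-b)..b, (f t + g t)) + 4 * b * c ^ 2 := by
  have : ∀ t, (f t - c) ^ 2 + (g t - c) ^ 2 = (f t ^ 2 + g t ^ 2) - 2 * c * (f t + g t) + 2 * c ^ 2 :=
    fun t => by ring
  simp only [this]
  rw [intervalIntegral.integral_add (Continuous.intervalIntegrable (by fun_prop) _ _)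
      (Continuous.intervalIntegrable (by fun_prop) _ _),
    intervalIntegral.integral_sub (Continuous.intervalIntegrable (by fun_prop) _ _)
      (Continuous.intervalIntegrable (by fun_prop) _ _), intervalIntegral.integral_const_mul,
      intervalIntegral.integral_const]
  simp only [smul_eq_mul]; ring

theorem main_mean (a b k : ℝ) (ha : 0 < a) (hab : a ≤ b) (hk : 0 < k) (hkb : k * b < π / 2)
    (hroot : tanh (k * a) * tan (k * b) = 1) (hl : 0 < k * tanh (k * a))
    {W Wx Wy : ℝ → ℝ → ℝ} (h : Good W Wx Wy) (h0 : Mn a b W = 0) :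
    k * tanh (k * a) * Bd a b W ≤ En a b Wx Wy := by
  have hb : 0 < b := ha.trans_le hab
  set c := 1 / (4 * a * b) * I2 a b W with hc
  have hG : Good (fun x y => W x y - c) Wx Wy :=
    ⟨h.cW.sub continuous_const, h.cx, h.cy, fun x y => (h.dx x y).sub_const c, fun x y => (h.dy x y).sub_const c⟩
  have hI : I2 a b (fun x y => W x y - c) = 0 := by
    have : I2 a b (fun x y => W x y - c) = I2 a b W - 4 * a * b * c := by
      unfold I2
      have : ∀ x, ∫ y in (-b)..b, (W x y - c) = (∫ y in (-b)..b, W x y) - 2 * b * c := by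
        intro x
        rw [intervalIntegral.integral_sub ((c2 h.cW x).intervalIntegrable _ _) (continuous_const.intervalIntegrable _ _),
          intervalIntegral.integral_const, smul_eq_mul]
        ring
      simp only [this]
      rw [intervalIntegral.integral_sub ((cInt h.cW b).intervalIntegrable _ _) (continuous_const.intervalIntegrable _ _),
          intervalIntegral.integral_const, smul_eq_mul]
      ring
    rw [this, hc]; field_simp; ring
  have := main_ineq a b k ha hab hk hkb hroot hG hI
  refine le_trans ?_ this
  gcongr
  unfold Bd
  rw [shift1 _ _ _ _ (c2 h.cW _) (c2 h.cW _), shift1 _ _ _ _ (c1 h.cW _) (c1 h.cW _)]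
  unfold Mn at h0
  have e : 0 ≤ 4 * b * c ^ 2 + 4 * a * c ^ 2 := by positivity
  have := congrArg (fun z => 2 * c * z) h0
  linarith

theorem test_fun (a b k : ℝ) (ha : 0 < a) (hb : 0 < b) (hk : 0 < k) (hkb : k * b < π / 2)
    (hroot : tanh (k * a) * tan (k * b) = 1) :
    Mn a b (fun x y => cosh (k * x) * sin (k * y)) = 0 ∧
    0 < Bd a b (fun x y => cosh (k * x) * sin (k * y)) ∧
    En a b (fun x y => k * sinh (k * x) * sin (k * y)) (fun x y => k * cosh (k * x) * cos (k * y))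
      = k * tanh (k * a) * Bd a b (fun x y => cosh (k * x) * sin (k * y)) := by
  have hkb0 : 0 < k * b := mul_pos hk hb
  have hs : 0 < sin (k * b) := sin_pos_of_pos_of_lt_pi hkb0 (by linarith [pi_pos])
  have hc : 0 < cos (k * b) := cos_pos_of_mem_Ioo ⟨by linarith [pi_pos], hkb⟩
  have htan : tanh (k * a) = cos (k * b) / sin (k * b) := by
    rw [tan_eq_sin_div_cos] at hroot
    field_simp at hroot ⊢
    linarith
  have csh : Continuous fun x : ℝ => sinh (k * x) := continuous_sinh.comp (by fun_prop)
  have cch : Continuous fun x : ℝ => cosh (k * x) := continuous_cosh.comp (by fun_prop)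
  have o : ∫ t in (-b)..b, sin (k * t) = 0 := by
    have : ∫ t in (-b)..b, sin (k * (-t)) = ∫ t in (-b)..b, sin (k * t) := by
      rw [intervalIntegral.integral_comp_neg (fun t => sin (k * t)), neg_neg]
    simp only [mul_neg, sin_neg, intervalIntegral.integral_neg] at this
    linarith
  set Is := ∫ t in (-b)..b, sin (k * t) ^ 2 with hIs
  set Ic := ∫ t in (-b)..b, cos (k * t) ^ 2 with hIc
  set Js := ∫ t in (-a)..a, sinh (k * t) ^ 2 with hJs
  set Jc := ∫ t in (-a)..a, cosh (k * t) ^ 2 with hJc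
  have hIs0 : 0 ≤ Is := intervalIntegral.integral_nonneg (by linarith) fun t _ => sq_nonneg _
  have hJc0 : 0 < Jc := by
    have : ∫ t in (-a)..a, (1:ℝ) ≤ Jc := intervalIntegral.integral_mono_on (by linarith)
      (continuous_const.intervalIntegrable _ _) ((cch.pow 2).intervalIntegrable _ _)
      (fun t _ => one_le_pow₀ (one_le_cosh _))
    rw [intervalIntegral.integral_const, smul_eq_mul] at this
    linarith
  have hB : Bd a b (fun x y => cosh (k * x) * sin (k * y)) = 2 * cosh (k * a) ^ 2 * Is + 2 * sin (k * b) ^ 2 * Jc := by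
    unfold Bd
    simp only [mul_neg, cosh_neg, sin_neg, neg_sq, ← two_mul, mul_pow, intervalIntegral.integral_const_mul,
      intervalIntegral.integral_mul_const]
    rw [← hIs, ← hJc]
    ring
  have hE : En a b (fun x y => k * sinh (k * x) * sin (k * y)) (fun x y => k * cosh (k * x) * cos (k * y))
     = k ^ 2 * Js * Is + k ^ 2 * Jc * Ic := by
    unfold En I2
    simp only [mul_pow, intervalIntegral.integral_const_mul,
      intervalIntegral.integral_mul_const]
    rw [← hIs, ← hJc, ← hIc, ← hJs]
  have f1 : k ^ 2 * Js + k ^ 2 * Jc = 2 * k * sinh (k * a) * cosh (k * a) := by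
    have : ∫ t in (-a)..a, (k ^ 2 * sinh (k * t) ^ 2 + k ^ 2 * cosh (k * t) ^ 2)
      = k * (sinh (k * a) * cosh (k * a)) - k * (sinh (k * (-a)) * cosh (k * (-a))) := by
      apply intervalIntegral.integral_eq_sub_of_hasDerivAt (f := fun t => k * (sinh (k * t) * cosh (k * t)))
      · intro t _
        have h0 : HasDerivAt (fun t : ℝ => k * t) k t := by simpa using (hasDerivAt_id t).const_mul k
        exact ((h0.sinh.mul h0.cosh).const_mul k).congr_deriv (by ring)
      · apply Continuous.intervalIntegrable; fun_prop
    rw [intervalIntegral.integral_add (Continuous.intervalIntegrable (by fun_prop) _ _)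
      (Continuous.intervalIntegrable (by fun_prop) _ _), intervalIntegral.integral_const_mul,
      intervalIntegral.integral_const_mul] at this
    simp only [mul_neg, cosh_neg, sinh_neg] at this
    linarith
  have f2 : k ^ 2 * Ic - k ^ 2 * Is = 2 * k * sin (k * b) * cos (k * b) := by
    have : ∫ t in (-b)..b, (k ^ 2 * cos (k * t) ^ 2 - k ^ 2 * sin (k * t) ^ 2)
      = k * (sin (k * b) * cos (k * b)) - k * (sin (k * (-b)) * cos (k * (-b))) := by
      apply intervalIntegral.integral_eq_sub_of_hasDerivAt (f := fun t => k * (sin (k * t) * cos (k * t)))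
      · intro t _
        have h0 : HasDerivAt (fun t : ℝ => k * t) k t := by simpa using (hasDerivAt_id t).const_mul k
        exact ((h0.sin.mul h0.cos).const_mul k).congr_deriv (by ring)
      · apply Continuous.intervalIntegrable; fun_prop
    rw [intervalIntegral.integral_sub (Continuous.intervalIntegrable (by fun_prop) _ _)
      (Continuous.intervalIntegrable (by fun_prop) _ _), intervalIntegral.integral_const_mul,
      intervalIntegral.integral_const_mul] at this
    simp only [mul_neg, cos_neg, sin_neg] at this
    linarith
  refine ⟨?_, ?_, ?_⟩
  · unfold Mn
    simp [mul_neg, cosh_neg, sin_neg, ← two_mul, intervalIntegral.integral_const_mul, o]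
  · rw [hB]
    have := cosh_pos (k * a)
    positivity
  · rw [hE, hB]
    have g1 : sinh (k * a) = tanh (k * a) * cosh (k * a) := by
      rw [tanh_eq_sinh_div_cosh]; field_simp [(cosh_pos (k * a)).ne']
    have g2 : cos (k * b) = tanh (k * a) * sin (k * b) := by
      rw [htan]; field_simp
    rw [g1] at f1
    rw [g2] at f2
    linear_combination Is * f1 + Jc * f2

/-- abstract conclusion -/
theorem final_abs (a b lam : ℝ) (ha : 0 < a) (hb : 0 < b) (hl : 0 < lam)
    (H1 : ∀ W Wx Wy : ℝ → ℝ → ℝ, Good W Wx Wy → Mn a b W = 0 → lam * Bd a b W ≤ En a b Wx Wy)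
    (H2 : ∃ w : EE → ℝ, ∃ Wx Wy : ℝ → ℝ → ℝ, ContDiff ℝ 1 w ∧ Good (fun x y => w !₂[x, y]) Wx Wy ∧
      Mn a b (fun x y => w !₂[x, y]) = 0 ∧ 0 < Bd a b (fun x y => w !₂[x, y]) ∧
      En a b Wx Wy = lam * Bd a b (fun x y => w !₂[x, y])) :
    IsLeast {C : ℝ | ∀ w : EE → ℝ, ContDiff ℝ 1 w → Mn a b (fun x y => w !₂[x, y]) = 0 →
      sqrt (Bd a b (fun x y => w !₂[x, y])) ≤ C * sqrt (∫ x in {x : EE |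
        x 0 ∈ Set.Ioo (-a) a ∧ x 1 ∈ Set.Ioo (-b) b}, ‖gradient w x‖ ^ 2)} (1 / sqrt lam) := by
  constructor
  · intro w hw h0
    rw [En_eq a b ha hb w hw]
    have := H1 _ _ _ (good_of_contDiff w hw) h0
    rw [one_div_mul_eq_div, ← sqrt_div' _ hl.le]
    apply sqrt_le_sqrt
    rw [le_div_iff₀ hl]
    linarith
  · intro C hC
    obtain ⟨w, Wx, Wy, hw, hG, h0, hB, hE⟩ := H2
    have h := hC w hw h0
    have hG' := good_of_contDiff w hw
    have ex : (fun x y => fderiv ℝ w !₂[x, y] !₂[1, 0]) = Wx := by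
      ext x y; exact (hG'.dx x y).unique (hG.dx x y)
    have ey : (fun x y => fderiv ℝ w !₂[x, y] !₂[0, 1]) = Wy := by
      ext x y; exact (hG'.dy x y).unique (hG.dy x y)
    rw [En_eq a b ha hb w hw, ex, ey, hE, sqrt_mul hl.le] at h
    have hsB := sqrt_pos.2 hB
    have hsl := sqrt_pos.2 hl
    rw [div_le_iff₀ hsl]
    have : 1 * sqrt (Bd a b (fun x y => w !₂[x, y])) ≤ C * sqrt lam * sqrt (Bd a b (fun x y => w !₂[x, y])) := by
      linarith
    exact le_of_mul_le_mul_right this hsB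

theorem good_test (k : ℝ) : Good (fun x y => cosh (k * x) * sin (k * y))
    (fun x y => k * sinh (k * x) * sin (k * y)) (fun x y => k * cosh (k * x) * cos (k * y)) := by
  have csh : Continuous fun p : ℝ × ℝ => sinh (k * p.1) := continuous_sinh.comp (by fun_prop)
  have cch : Continuous fun p : ℝ × ℝ => cosh (k * p.1) := continuous_cosh.comp (by fun_prop)
  have csi : Continuous fun p : ℝ × ℝ => sin (k * p.2) := by fun_prop
  have cco : Continuous fun p : ℝ × ℝ => cos (k * p.2) := by fun_prop
  have h0 : ∀ t, HasDerivAt (fun t : ℝ => k * t) k t := fun t => by simpa using (hasDerivAt_id t).const_mul k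
  exact ⟨cch.mul csi, (continuous_const.mul csh).mul csi, (continuous_const.mul cch).mul cco,
    fun x y => ((h0 x).cosh.mul_const _).congr_deriv (by ring),
    fun x y => ((h0 y).sin.const_mul _).congr_deriv (by ring)⟩

theorem final1 (a b k : ℝ) (ha : 0 < a) (hab : a ≤ b) (hk : 0 < k) (hkb : k * b < π / 2)
    (hroot : tanh (k * a) * tan (k * b) = 1) (hl : 0 < k * tanh (k * a)) :
    IsLeast {C : ℝ | ∀ w : EE → ℝ, ContDiff ℝ 1 w → Mn a b (fun x y => w !₂[x, y]) = 0 →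
      sqrt (Bd a b (fun x y => w !₂[x, y])) ≤ C * sqrt (∫ x in {x : EE |
        x 0 ∈ Set.Ioo (-a) a ∧ x 1 ∈ Set.Ioo (-b) b}, ‖gradient w x‖ ^ 2)} (1 / sqrt (k * tanh (k * a))) := by
  have hb : 0 < b := ha.trans_le hab
  obtain ⟨t1, t2, t3⟩ := test_fun a b k ha hb hk hkb hroot
  apply final_abs a b _ ha hb hl
  · intro W Wx Wy hG h0
    exact main_mean a b k ha hab hk hkb hroot hl hG h0
  · refine ⟨fun v => cosh (k * v 0) * sin (k * v 1), _, _, ?_, good_test k, t1, t2, t3⟩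
    apply ContDiff.mul
    · exact contDiff_cosh.comp (by fun_prop)
    · exact contDiff_sin.comp (by fun_prop)

theorem final2 (a b k : ℝ) (ha : 0 < a) (hab : a ≤ b) (hk : 0 < k) (hkb : k * b < π / 2)
    (hroot : tanh (k * a) * tan (k * b) = 1) (hl : 0 < k * tanh (k * a)) :
    IsLeast {C : ℝ | ∀ w : EE → ℝ, ContDiff ℝ 1 w → Mn b a (fun x y => w !₂[x, y]) = 0 →
      sqrt (Bd b a (fun x y => w !₂[x, y])) ≤ C * sqrt (∫ x in {x : EE |
        x 0 ∈ Set.Ioo (-b) b ∧ x 1 ∈ Set.Ioo (-a) a}, ‖gradient w x‖ ^ 2)} (1 / sqrt (k * tanh (k * a))) := by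
  have hb : 0 < b := ha.trans_le hab
  obtain ⟨t1, t2, t3⟩ := test_fun a b k ha hb hk hkb hroot
  have gt := good_test k
  rw [Mn_swap] at t1
  rw [Bd_swap] at t2
  rw [Bd_swap, En_swap a b _ _ gt.cx gt.cy] at t3
  apply final_abs b a _ hb ha hl
  · intro W Wx Wy hG h0
    rw [Mn_swap] at h0
    rw [Bd_swap, En_swap b a _ _ hG.cx hG.cy]
    exact main_mean a b k ha hab hk hkb hroot hl hG.swap h0
  · refine ⟨fun v => cosh (k * v 1) * sin (k * v 0), _, _, ?_, gt.swap, t1, t2, t3⟩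
    apply ContDiff.mul
    · exact contDiff_cosh.comp (by fun_prop)
    · exact contDiff_sin.comp (by fun_prop)

theorem params (a b z : ℝ) (ha : 0 < a) (hb : 0 < b) (al : ℝ) (hal : al = sqrt (b / a))
    (p1 : 0 < z * al) (p2 : z * al < π / 2) (p3 : tanh (z / al) * tan (z * al) = 1) :
    ∃ k, 0 < k ∧ k * b < π / 2 ∧ tanh (k * a) * tan (k * b) = 1 ∧ 0 < k * tanh (k * a) ∧
      k * tanh (k * a) = 2 * z / sqrt ((2 * a) * (2 * b)) * tanh (z / al) := by
  have hal0 : 0 < al := by rw [hal]; positivity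
  have hz : 0 < z := pos_of_mul_pos_left p1 hal0.le
  have hsa := sqrt_pos.2 ha
  have hsb := sqrt_pos.2 hb
  have qa : sqrt a * sqrt a = a := mul_self_sqrt ha.le
  have qb : sqrt b * sqrt b = b := mul_self_sqrt hb.le
  have hal' : al = sqrt b / sqrt a := by rw [hal, sqrt_div hb.le]
  have e0 : sqrt ((2 * a) * (2 * b)) = 2 * (sqrt a * sqrt b) := by
    rw [← sqrt_mul ha.le, show (2 * a) * (2 * b) = 2 ^ 2 * (a * b) by ring, sqrt_mul (by positivity),
      sqrt_sq (by norm_num)]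
  have e1 : z / (sqrt a * sqrt b) * a = z / al := by
    rw [hal']; field_simp; nlinarith
  have e2 : z / (sqrt a * sqrt b) * b = z * al := by
    rw [hal']; field_simp; nlinarith
  have hk : 0 < z / (sqrt a * sqrt b) := by positivity
  have ht : 0 < tanh (z / al) := by
    rw [tanh_eq_sinh_div_cosh]
    exact div_pos (sinh_pos_iff.2 (by positivity)) (cosh_pos _)
  refine ⟨z / (sqrt a * sqrt b), hk, ?_, ?_, ?_, ?_⟩
  · rw [e2]; exact p2
  · rw [e1, e2]; exact p3
  · rw [e1]; positivity
  · rw [e1, e0, mul_div_mul_left _ _ (by norm_num : (2:ℝ) ≠ 0)]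

theorem rectangle_whole_boundary_C2 (h₁ h₂ : ℝ) (hh₁ : 0 < h₁) (hh₂ : 0 < h₂)
    (z₀ : ℝ → ℝ)
    (hz₀ : ∀ α : ℝ, 0 < α →
      (0 < z₀ α * α ∧ z₀ α * α < π / 2 ∧
        Real.tanh (z₀ α / α) * Real.tan (z₀ α * α) = 1) ∧
      (∀ z : ℝ, 0 < z * α → z * α < π / 2 →
        Real.tanh (z / α) * Real.tan (z * α) = 1 → z = z₀ α))
    (α₀ : ℝ) (hα₀ : α₀ = Real.sqrt (max h₁ h₂ / min h₁ h₂)) :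
    IsLeast {C : ℝ |
      ∀ w : EuclideanSpace ℝ (Fin 2) → ℝ, ContDiff ℝ 1 w →
        ((∫ t in (-(h₂/2))..(h₂/2), (w !₂[-(h₁/2), t] + w !₂[h₁/2, t])) +
         (∫ s in (-(h₁/2))..(h₁/2), (w !₂[s, -(h₂/2)] + w !₂[s, h₂/2]))) = 0 →
        Real.sqrt ((∫ t in (-(h₂/2))..(h₂/2),
              ((w !₂[-(h₁/2), t]) ^ 2 + (w !₂[h₁/2, t]) ^ 2)) +
            (∫ s in (-(h₁/2))..(h₁/2),
              ((w !₂[s, -(h₂/2)]) ^ 2 + (w !₂[s, h₂/2]) ^ 2))) ≤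
          C * Real.sqrt (∫ x in {x : EuclideanSpace ℝ (Fin 2) |
            x 0 ∈ Set.Ioo (-(h₁/2)) (h₁/2) ∧ x 1 ∈ Set.Ioo (-(h₂/2)) (h₂/2)},
            ‖gradient w x‖ ^ 2)}
      (1 / Real.sqrt ((2 * z₀ α₀ / Real.sqrt (h₁ * h₂)) *
        Real.tanh (z₀ α₀ / α₀))) := by
  obtain ⟨⟨p1, p2, p3⟩, -⟩ := hz₀ α₀ (by
    rw [hα₀]
    have : 0 < min h₁ h₂ := lt_min hh₁ hh₂
    have : 0 < max h₁ h₂ := lt_max_of_lt_left hh₁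
    positivity)
  rcases le_total h₁ h₂ with hle | hle
  · obtain ⟨k, k1, k2, k3, k4, k5⟩ := params (h₁ / 2) (h₂ / 2) (z₀ α₀) (by positivity) (by positivity) α₀
      (by rw [hα₀, max_eq_right hle, min_eq_left hle]; congr 1; field_simp) p1 p2 p3
    have := final1 (h₁ / 2) (h₂ / 2) k (by positivity) (by linarith) k1 k2 k3 k4
    rw [k5, mul_div_cancel₀ _ (two_ne_zero), mul_div_cancel₀ _ (two_ne_zero)] at this
    exact this
  · obtain ⟨k, k1, k2, k3, k4, k5⟩ := params (h₂ / 2) (h₁ / 2) (z₀ α₀) (by positivity) (by positivity) α₀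
      (by rw [hα₀, max_eq_left hle, min_eq_right hle]; congr 1; field_simp) p1 p2 p3
    have := final2 (h₂ / 2) (h₁ / 2) k (by positivity) (by linarith) k1 k2 k3 k4
    rw [k5, mul_div_cancel₀ _ (two_ne_zero), mul_div_cancel₀ _ (two_ne_zero), mul_comm h₂ h₁] at this
    exact this
end

section
/- Let Ω = {(x₁,x₂) ∈ ℝ² : 0 < x₂ < x₁ < h} be an isosceles right triangle with legs of length h > 0, and let Γ = {x₁ = h, x₂ ∈ [0,h]} be one leg. Let z̃₀ be the unique root of the equation z·cot(z) + 1 = 0 in the interval (0,π) (z̃₀ ≈ 2.02876). Then the sharp constant C₁(Ω,Γ) in the inequality ‖w‖_{L²(Ω)} ≤ C₁‖∇w‖_{L²(Ω)} for all w ∈ H̃¹(Ω,Γ) is equal to h/z̃₀. -/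
open MeasureTheory Real

lemma aux_robin (h k : ℝ) (hh : 0 < h) (hk : 0 < k) (hkh : k * h < π)
    (hrob : k * h * cos (k * h) = - sin (k * h))
    (Z u : ℝ → ℝ) (hu : Continuous u) (hZ : ∀ x, HasDerivAt Z (u x) x) (hZ0 : Z 0 = 0) :
    k ^ 2 * (∫ x in (0:ℝ)..h, Z x ^ 2) ≤ (∫ x in (0:ℝ)..h, u x ^ 2) + Z h ^ 2 / h := by
  have hZc : Continuous Z := continuous_iff_continuousAt.2 fun x => (hZ x).continuousAt
  have hsin : ∀ x, 0 < x → x ≤ h → 0 < sin (k * x) := fun x hx hxh =>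
    sin_pos_of_pos_of_lt_pi (by positivity)
      (lt_of_le_of_lt (mul_le_mul_of_nonneg_left hxh hk.le) hkh)
  set H : ℝ → ℝ := fun x => Z x ^ 2 * (k * cos (k * x)) / sin (k * x) with hH
  have hsd : ∀ x, HasDerivAt (fun x => sin (k * x)) (k * cos (k * x)) x := fun x => by
    have := ((hasDerivAt_id x).const_mul k).sin
    simpa [mul_comm] using this
  have hcd : ∀ x, HasDerivAt (fun x => k * cos (k * x)) (-(k ^ 2 * sin (k * x))) x := fun x => by
    have := (((hasDerivAt_id x).const_mul k).cos).const_mul k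
    exact this.congr_deriv (by simp; ring)
  have hcont : ContinuousOn H (Set.Icc 0 h) := by
    intro x hx
    rcases hx.1.eq_or_lt with h0 | h0
    · subst h0
      apply ContinuousAt.continuousWithinAt
      rw [continuousAt_iff_punctured_nhds]
      have h1 : Filter.Tendsto (fun x => x⁻¹ * Z x) (nhdsWithin 0 {0}ᶜ) (nhds (u 0)) := by
        have := (hZ 0).tendsto_slope_zero
        simpa [hZ0] using this
      have h2 : Filter.Tendsto (fun x => x⁻¹ * sin (k * x)) (nhdsWithin 0 {0}ᶜ) (nhds k) := by
        have := (hsd 0).tendsto_slope_zero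
        simpa using this
      have h3 : Filter.Tendsto (fun x => Z x * (k * cos (k * x))) (nhdsWithin 0 {0}ᶜ)
          (nhds (Z 0 * (k * cos (k * 0)))) :=
        ((by fun_prop : Continuous fun x => Z x * (k * cos (k * x))).tendsto 0).mono_left
          nhdsWithin_le_nhds
      have h4 := h3.mul (h1.div h2 hk.ne')
      have e0 : H 0 = Z 0 * (k * cos (k * 0)) * (u 0 / k) := by simp [hH, hZ0]
      rw [e0]
      refine h4.congr' ?_
      filter_upwards [self_mem_nhdsWithin] with x hx
      have hx' : x ≠ 0 := hx
      simp only [hH, Pi.div_apply]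
      rw [mul_div_mul_left _ _ (inv_ne_zero hx')]
      ring
    · apply ContinuousAt.continuousWithinAt
      have := (hsin x h0 hx.2).ne'
      simp only [hH]
      exact ContinuousAt.div (by fun_prop) (by fun_prop) this
  have key := intervalIntegral.sub_le_integral_of_hasDeriv_right_of_le hh.le hcont
    (g' := fun x => ((2 * Z x * u x * (k * cos (k * x)) + Z x ^ 2 * (-(k ^ 2 * sin (k * x))))
      * sin (k * x) - Z x ^ 2 * (k * cos (k * x)) * (k * cos (k * x))) / sin (k * x) ^ 2)
    (φ := fun x => u x ^ 2 - k ^ 2 * Z x ^ 2) ?_ ?_ ?_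
  · rw [intervalIntegral.integral_sub, intervalIntegral.integral_const_mul] at key
    · have e0 : H 0 = 0 := by simp [hH]
      have e1 : H h = - (Z h ^ 2 / h) := by
        have := (hsin h hh le_rfl).ne'
        simp only [hH]
        rw [div_eq_iff this]
        field_simp
        linear_combination (Z h)^2 * hrob
      rw [e0, e1] at key
      linarith
    · exact (by fun_prop : Continuous _).intervalIntegrable _ _
    · exact (by fun_prop : Continuous _).intervalIntegrable _ _
  · intro x hx
    have := (hsin x hx.1 hx.2.le).ne'
    have hd := (((hZ x).pow 2).mul (hcd x)).div (hsd x) this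
    refine HasDerivAt.hasDerivWithinAt ?_
    exact hd.congr_deriv (by simp)
  · exact (by fun_prop : Continuous _).integrableOn_Icc
  · intro x hx
    have := (hsin x hx.1 hx.2.le)
    rw [div_le_iff₀ (by positivity)]
    have hcs := sin_sq_add_cos_sq (k * x)
    nlinarith [sq_nonneg (u x * sin (k*x) - Z x * k * cos (k * x))]

lemma aux_slice (h k : ℝ) (hh : 0 < h) (hk : 0 < k) (hkh : k * h < π)
    (hrob : k * h * cos (k * h) = - sin (k * h))
    (φ p : ℝ → ℝ) (y m : ℝ) (hφ : Continuous φ) (hd : ∀ x, x ≠ y → HasDerivAt φ (p x) x)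
    (hp : IntervalIntegrable p volume 0 h)
    (hp2 : IntervalIntegrable (fun x => p x ^ 2) volume 0 h) :
    k ^ 2 * ((∫ x in (0:ℝ)..h, φ x ^ 2) - (∫ x in (0:ℝ)..h, φ x) ^ 2 / h - h * m * φ h
      - h * m ^ 2 / 2 + m * (∫ x in (0:ℝ)..h, φ x)) ≤ ∫ x in (0:ℝ)..h, p x ^ 2 := by
  set g := ∫ x in (0:ℝ)..h, φ x with hg
  set c := m / 2 - g / h with hc
  set Z : ℝ → ℝ := fun x => ∫ s in (0:ℝ)..x, (φ s + c) with hZdef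
  have huc : Continuous fun s => φ s + c := by fun_prop
  have hZ : ∀ x, HasDerivAt Z (φ x + c) x := fun x =>
    intervalIntegral.integral_hasDerivAt_right (huc.intervalIntegrable _ _)
      (huc.stronglyMeasurableAtFilter _ _) huc.continuousAt
  have hZc : Continuous Z := continuous_iff_continuousAt.2 fun x => (hZ x).continuousAt
  have hZ0 : Z 0 = 0 := by simp [hZdef]
  have hZh : Z h = h * m / 2 := by
    simp only [hZdef]
    rw [intervalIntegral.integral_add (hφ.intervalIntegrable _ _) (by simp), ← hg]
    simp [hc]; field_simp; ring
  have hrobin := aux_robin h k hh hk hkh hrob Z _ huc hZ hZ0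
  have ipZ : IntervalIntegrable (fun x => p x * Z x) volume 0 h :=
    hp.mul_continuousOn hZc.continuousOn
  have iu2 : IntervalIntegrable (fun x => (φ x + c) ^ 2) volume 0 h :=
    (by fun_prop : Continuous _).intervalIntegrable _ _
  have iZ2 : IntervalIntegrable (fun x => Z x ^ 2) volume 0 h :=
    (by fun_prop : Continuous _).intervalIntegrable _ _
  have hparts : ∫ x in (0:ℝ)..h, (p x * Z x + (φ x + c) ^ 2) = (φ h + c) * Z h - (φ 0 + c) * Z 0 := by
    refine integral_eq_of_hasDerivAt_off_countable (fun x => (φ x + c) * Z x) _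
      (Set.countable_singleton y) ?_ ?_ ?_
    · exact Continuous.continuousOn (by fun_prop)
    · intro x hx
      have := ((hd x (by simpa using hx.2)).add_const c).mul (hZ x)
      exact this.congr_deriv (by ring)
    · exact ipZ.add iu2
  rw [intervalIntegral.integral_add ipZ iu2, hZ0, hZh] at hparts
  have hsq : 0 ≤ ∫ x in (0:ℝ)..h, (p x + k ^ 2 * Z x) ^ 2 :=
    intervalIntegral.integral_nonneg hh.le fun x _ => sq_nonneg _
  have hexp : ∫ x in (0:ℝ)..h, (p x + k ^ 2 * Z x) ^ 2 =
      (∫ x in (0:ℝ)..h, p x ^ 2) + 2 * k ^ 2 * (∫ x in (0:ℝ)..h, p x * Z x)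
        + k ^ 4 * ∫ x in (0:ℝ)..h, Z x ^ 2 := by
    rw [← intervalIntegral.integral_const_mul, ← intervalIntegral.integral_const_mul,
      ← intervalIntegral.integral_add hp2 (ipZ.const_mul _),
      ← intervalIntegral.integral_add (hp2.add (ipZ.const_mul _)) (iZ2.const_mul _)]
    congr 1; ext x; ring
  have hu2 : ∫ x in (0:ℝ)..h, (φ x + c) ^ 2 = (∫ x in (0:ℝ)..h, φ x ^ 2) + 2 * c * g + c ^ 2 * h := by
    have i1 : IntervalIntegrable (fun x => φ x ^ 2) volume 0 h :=
      (by fun_prop : Continuous _).intervalIntegrable _ _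
    have i2 : IntervalIntegrable (fun x => φ x) volume 0 h := hφ.intervalIntegrable _ _
    have : ∫ x in (0:ℝ)..h, (φ x + c) ^ 2 = ∫ x in (0:ℝ)..h, ((φ x ^ 2 + 2 * c * φ x) + c ^ 2) := by
      congr 1; ext x; ring
    rw [this, intervalIntegral.integral_add (i1.add (i2.const_mul _)) (by simp),
      intervalIntegral.integral_add i1 (i2.const_mul _), intervalIntegral.integral_const_mul]
    simp [hg]; ring
  rw [hexp] at hsq
  rw [hZh] at hrobin
  set A := ∫ x in (0:ℝ)..h, φ x ^ 2
  set U := ∫ x in (0:ℝ)..h, (φ x + c) ^ 2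
  set Q := ∫ x in (0:ℝ)..h, p x * Z x
  set ZZ := ∫ x in (0:ℝ)..h, Z x ^ 2
  have hr2 := mul_le_mul_of_nonneg_left hrobin (sq_nonneg k)
  have e1 : Q = (φ h + c) * (h * m / 2) - U := by linarith
  have e2 : A - g ^ 2 / h - h * m * φ h - h * m ^ 2 / 2 + m * g
      = U - (φ h + c) * (h * m) - (h * m / 2) ^ 2 / h := by
    rw [hu2, hc]; field_simp; ring
  rw [e2]
  rw [e1] at hsq
  nlinarith
lemma aux_core (h k : ℝ) (hh : 0 < h) (hk : 0 < k) (hkh : k * h < π)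
    (hrob : k * h * cos (k * h) = - sin (k * h))
    (W p : ℝ → ℝ → ℝ) (hW : Continuous fun q : ℝ × ℝ => W q.1 q.2)
    (hsym : ∀ x y, W x y = W y x)
    (hd : ∀ y x, x ≠ y → HasDerivAt (fun x => W x y) (p x y) x)
    (hp : ∀ y, IntervalIntegrable (fun x => p x y) volume 0 h)
    (hp2 : ∀ y, IntervalIntegrable (fun x => p x y ^ 2) volume 0 h)
    (hP : IntervalIntegrable (fun y => ∫ x in (0:ℝ)..h, p x y ^ 2) volume 0 h)
    (hmean : ∫ y in (0:ℝ)..h, W h y = 0) :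
    k ^ 2 / 2 * (∫ y in (0:ℝ)..h, ∫ x in (0:ℝ)..h, W x y ^ 2) ≤
      ∫ y in (0:ℝ)..h, ∫ x in (0:ℝ)..h, p x y ^ 2 := by
  have hW' : ∀ {f g : ℝ × ℝ → ℝ}, Continuous f → Continuous g →
      Continuous fun q => W (f q) (g q) := fun hf hg => hW.comp (hf.prodMk hg)
  have hW1 : ∀ {f g : ℝ → ℝ}, Continuous f → Continuous g →
      Continuous fun q => W (f q) (g q) := fun hf hg => hW.comp (hf.prodMk hg)
  set g : ℝ → ℝ := fun y => ∫ x in (0:ℝ)..h, W x y with hg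
  have gc : Continuous g := by
    refine intervalIntegral.continuous_parametric_intervalIntegral_of_continuous' ?_ _ _
    exact hW' continuous_snd continuous_fst
  set A : ℝ → ℝ := fun y => ∫ x in (0:ℝ)..h, W x y ^ 2 with hA
  have Ac : Continuous A := by
    refine intervalIntegral.continuous_parametric_intervalIntegral_of_continuous' ?_ _ _
    exact (hW' continuous_snd continuous_fst).pow 2
  set B : ℝ → ℝ := fun y => ∫ x in (0:ℝ)..h, W x y * g x with hB
  have Bc : Continuous B := by
    refine intervalIntegral.continuous_parametric_intervalIntegral_of_continuous' ?_ _ _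
    exact (hW' continuous_snd continuous_fst).mul (gc.comp continuous_snd)
  have Wc : ∀ y, Continuous fun x => W x y := fun y => hW1 continuous_id continuous_const
  have Whc : Continuous fun y => W h y := hW1 continuous_const continuous_id
  set G1 := ∫ y in (0:ℝ)..h, g y with hG1
  set G2 := ∫ y in (0:ℝ)..h, g y ^ 2 with hG2
  set AA := ∫ y in (0:ℝ)..h, A y with hAA
  set m := G1 / h ^ 2 with hm
  have hG1m : G1 = h ^ 2 * m := by rw [hm]; field_simp
  have ii : ∀ {f : ℝ → ℝ}, Continuous f → IntervalIntegrable f volume 0 h :=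
    fun hf => hf.intervalIntegrable _ _
  -- first inequality
  have h1 : k ^ 2 * (AA - G2 / h + h ^ 2 * m ^ 2 / 2) ≤
      ∫ y in (0:ℝ)..h, ∫ x in (0:ℝ)..h, p x y ^ 2 := by
    have hmono : ∫ y in (0:ℝ)..h, k ^ 2 * (A y - g y ^ 2 / h - h * m * W h y
        - h * m ^ 2 / 2 + m * g y) ≤ ∫ y in (0:ℝ)..h, ∫ x in (0:ℝ)..h, p x y ^ 2 := by
      refine intervalIntegral.integral_mono_on hh.le (ii (by fun_prop)) hP ?_
      intro y _
      exact aux_slice h k hh hk hkh hrob (fun x => W x y) (fun x => p x y) y m (Wc y) (hd y)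
        (hp y) (hp2 y)
    rw [intervalIntegral.integral_const_mul,
      intervalIntegral.integral_add (ii (by fun_prop)) (ii (by fun_prop)),
      intervalIntegral.integral_sub (ii (by fun_prop)) (ii (by fun_prop)),
      intervalIntegral.integral_sub (ii (by fun_prop)) (ii (by fun_prop)),
      intervalIntegral.integral_sub (ii (by fun_prop)) (ii (by fun_prop)),
      intervalIntegral.integral_div, intervalIntegral.integral_const_mul,
      intervalIntegral.integral_const_mul, hmean, intervalIntegral.integral_const,
      ← hAA, ← hG1, ← hG2, hG1m] at hmono
    refine le_trans (le_of_eq ?_) hmono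
    simp only [smul_eq_mul]
    ring
  -- Fubini
  have hBint : ∫ y in (0:ℝ)..h, B y = G2 := by
    simp only [hB]
    rw [intervalIntegral_intervalIntegral_swap]
    · rw [hG2]
      congr 1; ext x
      rw [intervalIntegral.integral_mul_const, sq]
      congr 1
      simp only [hg]
      congr 1; ext y
      exact hsym _ _
    · have hc : Continuous (Function.uncurry fun y x => W x y * g x) :=
        (hW' continuous_snd continuous_fst).mul (gc.comp continuous_snd)
      exact (hc.continuousOn.integrableOn_compact
        (isCompact_uIcc.prod isCompact_uIcc)).mono_set
        (Set.prod_mono Set.uIoc_subset_uIcc Set.uIoc_subset_uIcc)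
  -- second inequality
  have h2 : 0 ≤ AA - 2 * G2 / h + h ^ 2 * m ^ 2 := by
    have hT : ∀ y, A y - (2 / h) * B y + (G2 / h ^ 2 + h * m ^ 2 - 2 * m * G1 / h)
        + (2 * G1 / h ^ 2) * g y - g y ^ 2 / h
        = ∫ x in (0:ℝ)..h, (W x y - g x / h - g y / h + m) ^ 2 := by
      intro y
      have := Wc y
      have e : (fun x => (W x y - g x / h - g y / h + m) ^ 2) = fun x =>
          W x y ^ 2 + (1 / h ^ 2) * g x ^ 2 + (m - g y / h) ^ 2 + (-2 / h) * (W x y * g x)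
          + (2 * (m - g y / h)) * W x y + (-2 * (m - g y / h) / h) * g x := by
        ext x; field_simp; ring
      rw [e,
        intervalIntegral.integral_add (ii (by fun_prop)) (ii (by fun_prop)),
        intervalIntegral.integral_add (ii (by fun_prop)) (ii (by fun_prop)),
        intervalIntegral.integral_add (ii (by fun_prop)) (ii (by fun_prop)),
        intervalIntegral.integral_add (ii (by fun_prop)) (ii (by fun_prop)),
        intervalIntegral.integral_add (ii (by fun_prop)) (ii (by fun_prop)),
        intervalIntegral.integral_const_mul, intervalIntegral.integral_const_mul,
        intervalIntegral.integral_const_mul, intervalIntegral.integral_const_mul,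
        intervalIntegral.integral_const, ← hG1, ← hG2]
      change _ = A y + _ + _ + _ * B y + _ * g y + _
      simp only [smul_eq_mul]
      field_simp
      ring
    have hnn : 0 ≤ ∫ y in (0:ℝ)..h, (A y - (2 / h) * B y + (G2 / h ^ 2 + h * m ^ 2 - 2 * m * G1 / h)
        + (2 * G1 / h ^ 2) * g y - g y ^ 2 / h) := by
      refine intervalIntegral.integral_nonneg hh.le fun y _ => ?_
      rw [hT]
      exact intervalIntegral.integral_nonneg hh.le fun x _ => sq_nonneg _
    rw [intervalIntegral.integral_sub (ii (by fun_prop)) (ii (by fun_prop)),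
      intervalIntegral.integral_add (ii (by fun_prop)) (ii (by fun_prop)),
      intervalIntegral.integral_add (ii (by fun_prop)) (ii (by fun_prop)),
      intervalIntegral.integral_sub (ii (by fun_prop)) (ii (by fun_prop)),
      intervalIntegral.integral_div, intervalIntegral.integral_const_mul,
      intervalIntegral.integral_const_mul, intervalIntegral.integral_const,
      ← hAA, ← hG1, ← hG2, hBint, hG1m] at hnn
    refine le_trans hnn (le_of_eq ?_)
    simp only [smul_eq_mul]
    field_simp
    ring
  have h3 := mul_nonneg (sq_nonneg k) h2
  have e3 : k ^ 2 * (AA - G2 / h + h ^ 2 * m ^ 2 / 2) = k ^ 2 / 2 * AA +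
    (k ^ 2 * (AA - 2 * G2 / h + h ^ 2 * m ^ 2)) / 2 := by ring
  rw [e3] at h1
  linarith

def aux_T (h : ℝ) : Set (ℝ × ℝ) := {q | 0 < q.2 ∧ q.2 < q.1 ∧ q.1 < h}

lemma aux_E (h : ℝ) (f : EuclideanSpace ℝ (Fin 2) → ℝ) :
    ∫ x in {x : EuclideanSpace ℝ (Fin 2) | 0 < x 1 ∧ x 1 < x 0 ∧ x 0 < h}, f x =
      ∫ q in aux_T h, f !₂[q.1, q.2] := by
  have hmp : MeasurePreserving
      ((MeasurableEquiv.toLp 2 (Fin 2 → ℝ)).symm.trans MeasurableEquiv.finTwoArrow)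
      volume volume :=
    (volume_preserving_finTwoArrow ℝ).comp
      (EuclideanSpace.volume_preserving_symm_measurableEquiv_toLp (Fin 2))
  have := hmp.setIntegral_preimage_emb (MeasurableEquiv.measurableEmbedding _)
    (fun q => f !₂[q.1, q.2]) (aux_T h)
  rw [← this]
  congr 1
  ext x
  congr 1
  ext i
  fin_cases i <;> rfl

lemma aux_tri (h : ℝ) (hh : 0 < h) (a b : ℝ → ℝ → ℝ)
    (ha : Continuous fun q : ℝ × ℝ => a q.1 q.2) (hb : Continuous fun q : ℝ × ℝ => b q.1 q.2) :
    IntervalIntegrable (fun y => ∫ x in (0:ℝ)..h, if x < y then b y x else a x y) volume 0 h ∧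
    ∫ y in (0:ℝ)..h, ∫ x in (0:ℝ)..h, (if x < y then b y x else a x y) =
      (∫ q in aux_T h, a q.1 q.2) + ∫ q in aux_T h, b q.1 q.2 := by
  have hcomp : IsCompact (Set.Icc (0:ℝ) h ×ˢ Set.Icc (0:ℝ) h) := isCompact_Icc.prod isCompact_Icc
  have hsub : Set.Ioo (0:ℝ) h ×ˢ Set.Ioo (0:ℝ) h ⊆ Set.Icc (0:ℝ) h ×ˢ Set.Icc (0:ℝ) h :=
    Set.prod_mono Set.Ioo_subset_Icc_self Set.Ioo_subset_Icc_self
  set Q := Set.Ioo (0:ℝ) h ×ˢ Set.Ioo (0:ℝ) h with hQ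
  have hQm : MeasurableSet Q := measurableSet_Ioo.prod measurableSet_Ioo
  have ha' : Continuous fun q : ℝ × ℝ => a q.2 q.1 := ha.comp continuous_swap
  have ib : IntegrableOn (fun q : ℝ × ℝ => b q.1 q.2) Q :=
    (hb.continuousOn.integrableOn_compact hcomp).mono_set hsub
  have ia : IntegrableOn (fun q : ℝ × ℝ => a q.2 q.1) Q :=
    (ha'.continuousOn.integrableOn_compact hcomp).mono_set hsub
  have hSm : MeasurableSet {q : ℝ × ℝ | q.2 < q.1} := measurableSet_lt measurable_snd measurable_fst
  set F : ℝ × ℝ → ℝ := fun q => if q.2 < q.1 then b q.1 q.2 else a q.2 q.1 with hF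
  have iF : IntegrableOn F Q := by
    exact Integrable.piecewise (s := {q : ℝ × ℝ | q.2 < q.1}) hSm ib.integrableOn ia.integrableOn
  have iF' : Integrable F ((volume.restrict (Set.Ioo 0 h)).prod (volume.restrict (Set.Ioo 0 h))) := by
    rw [Measure.prod_restrict]; exact iF
  have hin : ∀ y, ∫ x in (0:ℝ)..h, (if x < y then b y x else a x y) =
      ∫ x in Set.Ioo 0 h, F (y, x) := by
    intro y
    rw [intervalIntegral.integral_of_le hh.le, integral_Ioc_eq_integral_Ioo]
  simp only [hin]
  constructor
  · rw [intervalIntegrable_iff_integrableOn_Ioo_of_le hh.le]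
    exact iF'.integral_prod_left
  · rw [intervalIntegral.integral_of_le hh.le, integral_Ioc_eq_integral_Ioo]
    rw [← setIntegral_prod F iF]
    change ∫ z in Q, F z = _
    rw [← integral_inter_add_sdiff hSm iF]
    rw [add_comm]
    congr 1
    · have e1 : ∫ q in Q \ {q : ℝ × ℝ | q.2 < q.1}, F q
          = ∫ q in Q \ {q : ℝ × ℝ | q.2 < q.1}, a q.2 q.1 := by
        refine setIntegral_congr_fun (hQm.diff hSm) fun q hq => ?_
        have : ¬ q.2 < q.1 := hq.2
        simp [hF, this]
      rw [e1]
      have e2 : (Q \ {q : ℝ × ℝ | q.2 < q.1} : Set (ℝ × ℝ)) =ᵐ[volume] Prod.swap ⁻¹' aux_T h := by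
        have hdiag : volume {q : ℝ × ℝ | q.1 = q.2} = 0 := by
          change (volume.prod volume) _ = 0
          rw [Measure.measure_prod_null (measurableSet_eq_fun measurable_fst measurable_snd)]
          refine Filter.Eventually.of_forall fun x => ?_
          have : (Prod.mk x ⁻¹' {q : ℝ × ℝ | q.1 = q.2}) = {x} := by
            ext z; simp [eq_comm]
          simp [this]
        have : ∀ᵐ q : ℝ × ℝ, ¬ q.1 = q.2 := by
          rw [ae_iff]; simpa using hdiag
        filter_upwards [this] with q hq
        refine propext ?_
        change ((q.1 ∈ Set.Ioo 0 h ∧ q.2 ∈ Set.Ioo 0 h) ∧ ¬ q.2 < q.1) ↔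
          (0 < q.1 ∧ q.1 < q.2 ∧ q.2 < h)
        constructor
        · rintro ⟨⟨h1, h2⟩, h3⟩
          exact ⟨h1.1, lt_of_le_of_ne (not_lt.1 h3) hq, h2.2⟩
        · rintro ⟨h1, h2, h3⟩
          exact ⟨⟨⟨h1, h2.trans h3⟩, ⟨h1.trans h2, h3⟩⟩, not_lt.2 h2.le⟩
      rw [setIntegral_congr_set e2]
      have hs : MeasurePreserving (Prod.swap : ℝ × ℝ → ℝ × ℝ) volume volume :=
        Measure.measurePreserving_swap
      exact hs.setIntegral_preimage_emb (MeasurableEquiv.prodComm.measurableEmbedding)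
        (fun q => a q.1 q.2) (aux_T h)
    · have e2 : Q ∩ {q : ℝ × ℝ | q.2 < q.1} = aux_T h := by
        ext q
        change ((q.1 ∈ Set.Ioo 0 h ∧ q.2 ∈ Set.Ioo 0 h) ∧ q.2 < q.1) ↔
          (0 < q.2 ∧ q.2 < q.1 ∧ q.1 < h)
        constructor
        · rintro ⟨⟨h1, h2⟩, h3⟩
          exact ⟨h2.1, h3, h1.2⟩
        · rintro ⟨h1, h2, h3⟩
          exact ⟨⟨⟨h1.trans h2, h3⟩, ⟨h1, h2.trans h3⟩⟩, h2⟩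
      have e1 : ∫ q in Q ∩ {q : ℝ × ℝ | q.2 < q.1}, F q
          = ∫ q in Q ∩ {q : ℝ × ℝ | q.2 < q.1}, b q.1 q.2 := by
        refine setIntegral_congr_fun (hQm.inter hSm) fun q hq => ?_
        have : q.2 < q.1 := hq.2
        simp [hF, this]
      rw [e1, e2]

lemma aux_pw (h y : ℝ) (a b : ℝ → ℝ) (ha : Continuous a) (hb : Continuous b) :
    IntervalIntegrable (fun x => if x < y then b x else a x) volume 0 h := by
  rw [intervalIntegrable_iff]
  have ib : IntegrableOn b (Set.uIoc 0 h) := intervalIntegrable_iff.1 (hb.intervalIntegrable _ _)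
  have ia : IntegrableOn a (Set.uIoc 0 h) := intervalIntegrable_iff.1 (ha.intervalIntegrable _ _)
  exact Integrable.piecewise (s := {x : ℝ | x < y}) measurableSet_Iio ib.integrableOn ia.integrableOn

lemma aux_toLp_deriv0 (x y : ℝ) :
    HasDerivAt (fun x : ℝ => (!₂[x, y] : EuclideanSpace ℝ (Fin 2)))
      (EuclideanSpace.single 0 1) x := by
  have e : (fun x : ℝ => (!₂[x, y] : EuclideanSpace ℝ (Fin 2))) =
      fun x => x • EuclideanSpace.single 0 (1:ℝ) + !₂[0, y] := by
    ext x i; fin_cases i <;> simp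
  rw [e]
  simpa using ((hasDerivAt_id x).smul_const (EuclideanSpace.single (0 : Fin 2) (1:ℝ))).add_const
    (!₂[0, y] : EuclideanSpace ℝ (Fin 2))

lemma aux_toLp_deriv1 (x y : ℝ) :
    HasDerivAt (fun x : ℝ => (!₂[y, x] : EuclideanSpace ℝ (Fin 2)))
      (EuclideanSpace.single 1 1) x := by
  have e : (fun x : ℝ => (!₂[y, x] : EuclideanSpace ℝ (Fin 2))) =
      fun x => x • EuclideanSpace.single 1 (1:ℝ) + !₂[y, 0] := by
    ext x i; fin_cases i <;> simp
  rw [e]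
  simpa using ((hasDerivAt_id x).smul_const (EuclideanSpace.single (1 : Fin 2) (1:ℝ))).add_const
    (!₂[y, 0] : EuclideanSpace ℝ (Fin 2))

lemma aux_grad (w : EuclideanSpace ℝ (Fin 2) → ℝ) (x : EuclideanSpace ℝ (Fin 2)) :
    ‖gradient w x‖ ^ 2 = (fderiv ℝ w x (EuclideanSpace.single 0 1)) ^ 2
      + (fderiv ℝ w x (EuclideanSpace.single 1 1)) ^ 2 := by
  have hi : ∀ i, gradient w x i = fderiv ℝ w x (EuclideanSpace.single i 1) := by
    intro i
    have h1 : inner ℝ (gradient w x) (EuclideanSpace.single i (1:ℝ)) =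
        fderiv ℝ w x (EuclideanSpace.single i 1) := by
      simp [gradient]
    rw [← h1, EuclideanSpace.inner_single_right]
    simp
  rw [EuclideanSpace.real_norm_sq_eq, Fin.sum_univ_two, hi, hi]

lemma aux_cont2 : Continuous fun q : ℝ × ℝ => (!₂[q.1, q.2] : EuclideanSpace ℝ (Fin 2)) := by
  refine (PiLp.continuous_toLp 2 _).comp (continuous_pi fun i => ?_)
  fin_cases i
  · exact continuous_fst
  · exact continuous_snd

lemma aux_upper (h k : ℝ) (hh : 0 < h) (hk : 0 < k) (hkh : k * h < π)
    (hrob : k * h * cos (k * h) = - sin (k * h))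
    (w : EuclideanSpace ℝ (Fin 2) → ℝ) (hw : ContDiff ℝ 1 w)
    (hmean : (∫ t in (0:ℝ)..h, w !₂[h, t]) = 0) :
    k ^ 2 * (∫ x in {x : EuclideanSpace ℝ (Fin 2) | 0 < x 1 ∧ x 1 < x 0 ∧ x 0 < h}, (w x) ^ 2) ≤
      ∫ x in {x : EuclideanSpace ℝ (Fin 2) | 0 < x 1 ∧ x 1 < x 0 ∧ x 0 < h},
        ‖gradient w x‖ ^ 2 := by
  have hwc : Continuous w := hw.continuous
  have hfc : ∀ v, Continuous fun x => fderiv ℝ w x v := fun v =>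
    (hw.continuous_fderiv (by simp)).clm_apply continuous_const
  set ω : ℝ → ℝ → ℝ := fun x y => w !₂[x, y] with hω
  set D0 : ℝ → ℝ → ℝ := fun x y => fderiv ℝ w !₂[x, y] (EuclideanSpace.single 0 1) with hD0
  set D1 : ℝ → ℝ → ℝ := fun x y => fderiv ℝ w !₂[x, y] (EuclideanSpace.single 1 1) with hD1
  have cω : Continuous fun q : ℝ × ℝ => ω q.1 q.2 := hwc.comp aux_cont2
  have cD0 : Continuous fun q : ℝ × ℝ => D0 q.1 q.2 := (hfc _).comp aux_cont2
  have cD1 : Continuous fun q : ℝ × ℝ => D1 q.1 q.2 := (hfc _).comp aux_cont2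
  have dω0 : ∀ x y, HasDerivAt (fun x => ω x y) (D0 x y) x := fun x y =>
    ((hw.differentiable (by simp)) _).hasFDerivAt.comp_hasDerivAt x (aux_toLp_deriv0 x y)
  have dω1 : ∀ x y, HasDerivAt (fun x => ω y x) (D1 y x) x := fun x y =>
    ((hw.differentiable (by simp)) _).hasFDerivAt.comp_hasDerivAt x (aux_toLp_deriv1 x y)
  set W : ℝ → ℝ → ℝ := fun x y => ω (max x y) (min x y) with hWdef
  set p : ℝ → ℝ → ℝ := fun x y => if x < y then D1 y x else D0 x y with hpdef
  have hp2e : ∀ x y, p x y ^ 2 = if x < y then D1 y x ^ 2 else D0 x y ^ 2 := by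
    intro x y; simp only [hpdef]; split_ifs <;> rfl
  have hW2e : ∀ x y, W x y ^ 2 = if x < y then ω y x ^ 2 else ω x y ^ 2 := by
    intro x y; simp only [hWdef]; split_ifs with hxy
    · rw [max_eq_right hxy.le, min_eq_left hxy.le]
    · rw [max_eq_left (not_lt.1 hxy), min_eq_right (not_lt.1 hxy)]
  have t1 := aux_tri h hh (fun x y => D0 x y ^ 2) (fun x y => D1 x y ^ 2) (cD0.pow 2) (cD1.pow 2)
  have t2 := aux_tri h hh (fun x y => ω x y ^ 2) (fun x y => ω x y ^ 2) (cω.pow 2) (cω.pow 2)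
  have sl : ∀ {f : ℝ → ℝ → ℝ}, (Continuous fun q : ℝ × ℝ => f q.1 q.2) → ∀ y,
      Continuous (fun x => f x y) ∧ Continuous (fun x => f y x) := fun hf y =>
    ⟨hf.comp (continuous_id.prodMk continuous_const), hf.comp (continuous_const.prodMk continuous_id)⟩
  have core := aux_core h k hh hk hkh hrob W p
    (cω.comp ((continuous_fst.max continuous_snd).prodMk (continuous_fst.min continuous_snd)))
    (fun x y => by simp only [hWdef, max_comm, min_comm]) ?_
    (fun y => aux_pw h y _ _ (sl cD0 y).1 (sl cD1 y).2) ?_ ?_ ?_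
  · simp only [hp2e, hW2e] at core
    rw [t1.2, t2.2] at core
    rw [aux_E, aux_E]
    simp only [aux_grad]
    have hcint : ∀ {f : ℝ × ℝ → ℝ}, Continuous f → IntegrableOn f (aux_T h) := fun hf =>
      (hf.continuousOn.integrableOn_compact
        (isCompact_Icc.prod isCompact_Icc : IsCompact (Set.Icc (0:ℝ) h ×ˢ Set.Icc (0:ℝ) h))).mono_set
        (fun q hq => ⟨⟨(hq.1.trans hq.2.1).le, hq.2.2.le⟩, ⟨hq.1.le, (hq.2.1.trans hq.2.2).le⟩⟩)
    have hadd : ∫ q in aux_T h, (D0 q.1 q.2 ^ 2 + D1 q.1 q.2 ^ 2) =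
        (∫ q in aux_T h, D0 q.1 q.2 ^ 2) + ∫ q in aux_T h, D1 q.1 q.2 ^ 2 :=
      integral_add (hcint (cD0.pow 2)) (hcint (cD1.pow 2))
    change k ^ 2 * ∫ q in aux_T h, ω q.1 q.2 ^ 2 ≤
      ∫ q in aux_T h, (D0 q.1 q.2 ^ 2 + D1 q.1 q.2 ^ 2)
    rw [hadd]
    linarith
  · intro y x hxy
    rcases lt_or_gt_of_ne hxy with hlt | hgt
    · simp only [hpdef, if_pos hlt]
      refine (dω1 x y).congr_of_eventuallyEq ?_
      filter_upwards [Iio_mem_nhds hlt] with z hz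
      have hz' : z < y := hz
      simp only [hWdef]
      rw [max_eq_right hz'.le, min_eq_left hz'.le]
    · simp only [hpdef, if_neg (not_lt.2 hgt.le)]
      refine (dω0 x y).congr_of_eventuallyEq ?_
      filter_upwards [Ioi_mem_nhds hgt] with z hz
      have hz' : y < z := hz
      simp only [hWdef]
      rw [max_eq_left hz'.le, min_eq_right hz'.le]
  · intro y
    simp only [hp2e]
    exact aux_pw h y _ _ ((sl cD0 y).1.pow 2) ((sl cD1 y).2.pow 2)
  · simp only [hp2e]
    exact t1.1
  · refine Eq.trans ?_ hmean
    refine intervalIntegral.integral_congr fun y hy => ?_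
    rw [Set.uIcc_of_le hh.le] at hy
    simp only [hWdef]
    rw [max_eq_left hy.2, min_eq_right hy.2]

lemma aux_symtri (h : ℝ) (hh : 0 < h) (f : ℝ → ℝ → ℝ)
    (hf : Continuous fun q : ℝ × ℝ => f q.1 q.2) (hs : ∀ x y, f x y = f y x) :
    ∫ y in (0:ℝ)..h, ∫ x in (0:ℝ)..h, f x y = 2 * ∫ q in aux_T h, f q.1 q.2 := by
  have := (aux_tri h hh f f hf hf).2
  have e : ∀ x y, (if x < y then f y x else f x y) = f x y := by
    intro x y; split_ifs
    · exact hs _ _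
    · rfl
  simp only [e] at this
  rw [this]; ring

lemma aux_extremal (h k : ℝ) (hh : 0 < h) (hk : 0 < k)
    (hrob : k * h * cos (k * h) = - sin (k * h)) :
    ∃ w : EuclideanSpace ℝ (Fin 2) → ℝ, ContDiff ℝ 1 w ∧
      (∫ t in (0:ℝ)..h, w !₂[h, t]) = 0 ∧
      0 < (∫ x in {x : EuclideanSpace ℝ (Fin 2) | 0 < x 1 ∧ x 1 < x 0 ∧ x 0 < h}, (w x) ^ 2) ∧
      ∫ x in {x : EuclideanSpace ℝ (Fin 2) | 0 < x 1 ∧ x 1 < x 0 ∧ x 0 < h},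
        ‖gradient w x‖ ^ 2 =
      k ^ 2 * (∫ x in {x : EuclideanSpace ℝ (Fin 2) | 0 < x 1 ∧ x 1 < x 0 ∧ x 0 < h}, (w x) ^ 2)
        := by
  have hcd : ContDiff ℝ 1 fun x : EuclideanSpace ℝ (Fin 2) => cos (k * x 0) + cos (k * x 1) := by
    fun_prop
  have ii : ∀ {f : ℝ → ℝ}, Continuous f → IntervalIntegrable f volume 0 h :=
    fun hf => hf.intervalIntegrable _ _
  have hIc : ∫ t in (0:ℝ)..h, cos (k * t) = - (h * cos (k * h)) := by
    rw [intervalIntegral.integral_comp_mul_left (fun t => cos t) hk.ne', integral_cos]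
    simp; field_simp; linarith
  have hIs2 : ∫ t in (0:ℝ)..h, sin (k * t) ^ 2 = h / 2 + h * cos (k * h) ^ 2 / 2 := by
    rw [intervalIntegral.integral_comp_mul_left (fun t => sin t ^ 2) hk.ne', integral_sin_sq]
    simp; field_simp; linear_combination - cos (k * h) * hrob
  have hIc2 : ∫ t in (0:ℝ)..h, cos (k * t) ^ 2 = h / 2 - h * cos (k * h) ^ 2 / 2 := by
    rw [intervalIntegral.integral_comp_mul_left (fun t => cos t ^ 2) hk.ne', integral_cos_sq]
    simp; field_simp; linear_combination cos (k * h) * hrob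
  -- square integrals
  have hL := aux_symtri h hh (fun x y => (cos (k * x) + cos (k * y)) ^ 2) (by fun_prop)
    (fun x y => by ring)
  have hG := aux_symtri h hh (fun x y => k ^ 2 * (sin (k * x) ^ 2 + sin (k * y) ^ 2)) (by fun_prop)
    (fun x y => by ring)
  have hL1 : ∀ y, ∫ x in (0:ℝ)..h, (cos (k * x) + cos (k * y)) ^ 2 =
      (h / 2 - h * cos (k * h) ^ 2 / 2) + (-2 * (h * cos (k * h))) * cos (k * y)
        + h * cos (k * y) ^ 2 := by
    intro y
    have e : (fun x => (cos (k * x) + cos (k * y)) ^ 2) = fun x =>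
      cos (k * x) ^ 2 + (2 * cos (k * y)) * cos (k * x) + cos (k * y) ^ 2 := by ext x; ring
    rw [e, intervalIntegral.integral_add (ii (by fun_prop)) (ii (by fun_prop)),
      intervalIntegral.integral_add (ii (by fun_prop)) (ii (by fun_prop)),
      intervalIntegral.integral_const_mul, hIc, hIc2, intervalIntegral.integral_const]
    simp; ring
  have hG1 : ∀ y, ∫ x in (0:ℝ)..h, k ^ 2 * (sin (k * x) ^ 2 + sin (k * y) ^ 2) =
      k ^ 2 * ((h / 2 + h * cos (k * h) ^ 2 / 2) + h * sin (k * y) ^ 2) := by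
    intro y
    rw [intervalIntegral.integral_const_mul,
      intervalIntegral.integral_add (ii (by fun_prop)) (ii (by fun_prop)),
      hIs2, intervalIntegral.integral_const]
    simp
  simp only [hL1] at hL
  simp only [hG1] at hG
  rw [intervalIntegral.integral_add (ii (by fun_prop)) (ii (by fun_prop)),
    intervalIntegral.integral_add (ii (by fun_prop)) (ii (by fun_prop)),
    intervalIntegral.integral_const_mul, intervalIntegral.integral_const_mul, hIc, hIc2,
    intervalIntegral.integral_const, smul_eq_mul] at hL
  rw [intervalIntegral.integral_const_mul,
    intervalIntegral.integral_add (ii (by fun_prop)) (ii (by fun_prop)),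
    intervalIntegral.integral_const_mul, hIs2,
    intervalIntegral.integral_const, smul_eq_mul] at hG
  refine ⟨_, hcd, ?_, ?_, ?_⟩
  · simp only [Matrix.cons_val_zero, Matrix.cons_val_one, Matrix.cons_val_fin_one]
    rw [intervalIntegral.integral_add (ii (by fun_prop)) (ii (by fun_prop)), hIc,
      intervalIntegral.integral_const]
    simp
  · rw [aux_E]
    simp only [Matrix.cons_val_zero, Matrix.cons_val_one, Matrix.cons_val_fin_one]
    have : 0 < h ^ 2 := by positivity
    nlinarith [mul_nonneg this.le (sq_nonneg (cos (k * h)))]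
  · rw [aux_E, aux_E]
    have hgr : ∀ x y : ℝ, ‖gradient (fun x : EuclideanSpace ℝ (Fin 2) =>
        cos (k * x 0) + cos (k * x 1)) !₂[x, y]‖ ^ 2
        = k ^ 2 * (sin (k * x) ^ 2 + sin (k * y) ^ 2) := by
      intro x y
      have hdf := ((hcd.differentiable (by simp)) !₂[x, y]).hasFDerivAt
      have d0 := hdf.comp_hasDerivAt x (aux_toLp_deriv0 x y)
      have d1 := hdf.comp_hasDerivAt y (aux_toLp_deriv1 y x)
      have s0 : HasDerivAt (fun x => cos (k * x) + cos (k * y)) (-(k * sin (k * x))) x := by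
        have := (((hasDerivAt_id x).const_mul k).cos).add_const (cos (k * y))
        exact this.congr_deriv (by simp; ring)
      have s1 : HasDerivAt (fun y => cos (k * x) + cos (k * y)) (-(k * sin (k * y))) y := by
        have := (((hasDerivAt_id y).const_mul k).cos).const_add (cos (k * x))
        exact this.congr_deriv (by simp; ring)
      rw [aux_grad, d0.unique s0, d1.unique s1]
      ring
    simp only [hgr]
    simp only [Matrix.cons_val_zero, Matrix.cons_val_one, Matrix.cons_val_fin_one]
    linear_combination -(1 / 2) * hG + k ^ 2 / 2 * hL

/-- The sharp constant `C₁(Ω,Γ)` in `‖w‖_{L²(Ω)} ≤ C₁ ‖∇w‖_{L²(Ω)}` for functions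
with zero mean trace on `Γ`, where `Ω = {0 < x₂ < x₁ < h}` is an isosceles right
triangle and `Γ = {x₁ = h, x₂ ∈ [0,h]}` is one leg, equals `h/z̃₀`, where `z̃₀`
is the unique root of `z·cot z + 1 = 0` in `(0,π)` (`z̃₀ ≈ 2.02876`). -/
theorem triangle_one_leg_C1 (h : ℝ) (hh : 0 < h) (z₀ : ℝ)
    (hz₀ : z₀ ∈ Set.Ioo 0 π ∧ z₀ * Real.cot z₀ + 1 = 0)
    (huniq : ∀ z ∈ Set.Ioo (0:ℝ) π, z * Real.cot z + 1 = 0 → z = z₀) :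
    IsLeast {C : ℝ |
      ∀ w : EuclideanSpace ℝ (Fin 2) → ℝ, ContDiff ℝ 1 w →
        (∫ t in (0:ℝ)..h, w !₂[h, t]) = 0 →
        Real.sqrt (∫ x in {x : EuclideanSpace ℝ (Fin 2) |
            0 < x 1 ∧ x 1 < x 0 ∧ x 0 < h}, (w x) ^ 2) ≤
          C * Real.sqrt (∫ x in {x : EuclideanSpace ℝ (Fin 2) |
            0 < x 1 ∧ x 1 < x 0 ∧ x 0 < h}, ‖gradient w x‖ ^ 2)}
      (h / z₀) := by
  obtain ⟨⟨hz0, hzpi⟩, hz⟩ := hz₀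
  have hsin : 0 < sin z₀ := sin_pos_of_pos_of_lt_pi hz0 hzpi
  set k := z₀ / h with hk
  have hk0 : 0 < k := div_pos hz0 hh
  have hkh : k * h = z₀ := by rw [hk]; field_simp
  have hrob : k * h * cos (k * h) = - sin (k * h) := by
    rw [hkh]
    rw [Real.cot_eq_cos_div_sin] at hz
    field_simp at hz
    linarith
  have hinv : h / z₀ = 1 / k := by rw [hk]; field_simp
  rw [hinv]
  constructor
  · intro w hw hmean
    have := aux_upper h k hh hk0 (by rw [hkh]; exact hzpi) hrob w hw hmean
    have h2 := Real.sqrt_le_sqrt this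
    rw [Real.sqrt_mul (sq_nonneg k), Real.sqrt_sq hk0.le] at h2
    rw [one_div, inv_mul_eq_div, le_div_iff₀ hk0]
    linarith
  · intro C hC
    obtain ⟨w, hw, hm, hpos, heq⟩ := aux_extremal h k hh hk0 hrob
    have h2 := hC w hw hm
    rw [heq, Real.sqrt_mul (sq_nonneg k), Real.sqrt_sq hk0.le] at h2
    have h3 := Real.sqrt_pos.2 hpos
    rw [div_le_iff₀ hk0]
    by_contra hlt
    push Not at hlt
    nlinarith
end
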